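/- arXiv:1005.5716 — 4 statements merged into one kernel-verified Lean document; each statement's English description precedes it below -/
import Mathlib

section
/- Let 0 < p'(n) ≤ p(n) ≤ 1 with n²p'(n) → ∞, let ε > 0, and let P be a monotone increasing graph property. If G(n,p') asymptotically almost surely has global resilience at least (1/2 − ε/2)·n²p'/2 with respect to P, then G(n,p) asymptotically almost surely has global resilience at least (1/2 − ε)·n²p/2 with respect to P. -/
/-!
Write `q = p'/p`. Keeping each edge of `G ∼ G(n,p)` independently with probability `q` yields
`G' ∼ G(n,p')`. If `G` is not resilient, fix `H ≤ G` without the property, obtained by removing a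
set `D` of fewer than `r = (1/2 - ε) n²p/2` edges. By monotonicity `G' ∩ H` fails the property as
well, and it arises from `G'` by removing `G' ∩ D`, whose expected size is at most
`q r = (1/2 - ε) n²p'/2`. By Markov's inequality its size is below
`r' = (1/2 - ε/2) n²p'/2` with probability at least
`c = 1 - (1/2 - ε)/(1/2 - ε/2) > 0`. Hence
`c * ℙ[G(n,p) not resilient] ≤ ℙ[G(n,p') not resilient]`, and the right-hand side tends to `0`.
When `ε ≥ 1/2` the required resilience is nonpositive and there is nothing to prove.

The coupling is carried out for random subsets of a finite set (`coupling_bound`), using the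
two-stage exposure identity `sum_supersets` and the Markov bound `markov_subset`.
-/

open Filter Topology Classical

/-- Probability that a graph drawn from the binomial random graph `G(n,p)` (each pair of
vertices forming an edge independently with probability `p`) satisfies the predicate `P`. -/
noncomputable def gnpProb (V : Type) [Fintype V] [DecidableEq V] (p : ℝ)
    (P : SimpleGraph V → Prop) : ℝ :=
  ∑ G : SimpleGraph V,
    if P G then p ^ G.edgeSet.ncard *
      (1 - p) ^ ((Fintype.card V).choose 2 - G.edgeSet.ncard) else 0

/-- `G` contains a cycle of length `t`. -/
def HasCycleLength {V : Type} (G : SimpleGraph V) (t : ℕ) : Prop :=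
  ∃ (v : V) (w : G.Walk v v), w.IsCycle ∧ w.length = t

/-- A graph `G` has global resilience at least `r` with respect to `P` if removing
fewer than `r` edges from `G` always leaves a graph having `P`. -/
def HasGlobalResilienceAtLeast {V : Type} (G : SimpleGraph V)
    (P : SimpleGraph V → Prop) (r : ℝ) : Prop :=
  ∀ G' : SimpleGraph V, G' ≤ G →
    ((G.edgeSet.ncard : ℝ) - (G'.edgeSet.ncard : ℝ) < r) → P G'

/-! ### Random subsets of a finite set -/

/-- The probability that the random subset of `S`, containing each element independently with
probability `p`, equals `T` (for `T ⊆ S`). -/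
noncomputable def subsetWeight {α : Type} (p : ℝ) (S T : Finset α) : ℝ :=
  p ^ T.card * (1 - p) ^ (S.card - T.card)

lemma subsetWeight_nonneg {α : Type} {p : ℝ} (h0 : 0 ≤ p) (h1 : p ≤ 1) (S T : Finset α) :
    0 ≤ subsetWeight p S T :=
  mul_nonneg (pow_nonneg h0 _) (pow_nonneg (by linarith) _)

lemma sum_subsetWeight {α : Type} (p : ℝ) (S : Finset α) :
    ∑ T ∈ S.powerset, subsetWeight p S T = 1 := by
  simp only [subsetWeight, Finset.sum_pow_mul_eq_add_pow]
  simp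

/-- A fixed element of `S` lies in the random subset with probability `q`. -/
lemma sum_subsetWeight_mem {α : Type} (q : ℝ) (S : Finset α) (d : α) (hd : d ∈ S) :
    ∑ T ∈ S.powerset, (if d ∈ T then subsetWeight q S T else 0) = q := by
  obtain ⟨A, hdA, rfl⟩ : ∃ A : Finset α, d ∉ A ∧ insert d A = S :=
    ⟨S.erase d, Finset.notMem_erase d S, Finset.insert_erase hd⟩
  rw [Finset.sum_powerset_insert hdA]
  have h1 : ∑ T ∈ A.powerset, (if d ∈ T then subsetWeight q (insert d A) T else 0) = 0 := by
    refine Finset.sum_eq_zero fun T hT => if_neg fun h => hdA (Finset.mem_powerset.1 hT h)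
  have h2 : ∑ T ∈ A.powerset, (if d ∈ insert d T then
      subsetWeight q (insert d A) (insert d T) else 0)
      = ∑ T ∈ A.powerset, q * subsetWeight q A T := by
    refine Finset.sum_congr rfl fun T hT => ?_
    have hdT : d ∉ T := fun h => hdA (Finset.mem_powerset.1 hT h)
    simp only [Finset.mem_insert_self, if_true, subsetWeight,
      Finset.card_insert_of_notMem hdT, Finset.card_insert_of_notMem hdA, Nat.add_sub_add_right]
    ring
  rw [h1, h2, ← Finset.mul_sum, sum_subsetWeight]
  ring

/-- The random subset meets `D ⊆ S` in `q * |D|` elements on average. -/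
lemma sum_subsetWeight_card_inter {α : Type} (q : ℝ) (S D : Finset α) (hD : D ⊆ S) :
    ∑ T ∈ S.powerset, subsetWeight q S T * ((T ∩ D).card : ℝ) = q * D.card := by
  have h : ∀ T ∈ S.powerset, subsetWeight q S T * ((T ∩ D).card : ℝ)
      = ∑ d ∈ D, (if d ∈ T then subsetWeight q S T else 0) := by
    intro T _
    rw [← Finset.sum_filter, Finset.sum_const, nsmul_eq_mul, Finset.filter_mem_eq_inter,
      Finset.inter_comm, mul_comm]
  rw [Finset.sum_congr rfl h, Finset.sum_comm,
    Finset.sum_congr rfl fun d hd => sum_subsetWeight_mem q S d (hD hd)]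
  simp [mul_comm]

/-- Markov's inequality for `|T ∩ D|`, where `T` is the random subset of `S`. -/
lemma markov_subset {α : Type} {q c t : ℝ} (h0 : 0 ≤ q) (h1 : q ≤ 1) (ht : 0 < t)
    (S D : Finset α) (hD : D ⊆ S) (hDt : q * D.card ≤ (1 - c) * t)
    (B : Finset α → Prop) (hB : ∀ T ⊆ S, ((T ∩ D).card : ℝ) < t → B T) :
    c ≤ ∑ T ∈ S.powerset, (if B T then subsetWeight q S T else 0) := by
  have key : ∀ T ∈ S.powerset, subsetWeight q S T - subsetWeight q S T * ((T ∩ D).card : ℝ) / t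
      ≤ (if B T then subsetWeight q S T else 0) := by
    intro T hT
    have hw := subsetWeight_nonneg h0 h1 S T
    split_ifs with h
    · have : 0 ≤ subsetWeight q S T * ((T ∩ D).card : ℝ) / t := by positivity
      linarith
    · have h3 : t ≤ ((T ∩ D).card : ℝ) := by
        by_contra h4
        exact h (hB T (Finset.mem_powerset.1 hT) (not_le.1 h4))
      have : subsetWeight q S T ≤ subsetWeight q S T * ((T ∩ D).card : ℝ) / t := by
        rw [le_div_iff₀ ht]
        exact mul_le_mul_of_nonneg_left h3 hw
      linarith
  have h := Finset.sum_le_sum key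
  rw [Finset.sum_sub_distrib, sum_subsetWeight, ← Finset.sum_div,
    sum_subsetWeight_card_inter q S D hD] at h
  have : q * D.card / t ≤ 1 - c := by rwa [div_le_iff₀ ht]
  linarith

/-- Two-stage exposure: a `q`-random subset of a `p`-random subset of `E` is a `p * q`-random
subset of `E`. -/
lemma sum_supersets {α : Type} (p q : ℝ) (E T : Finset α) (hT : T ⊆ E) :
    ∑ S ∈ E.powerset, (if T ⊆ S then subsetWeight p E S * subsetWeight q S T else 0)
      = subsetWeight (p * q) E T := by
  rw [← Finset.sum_filter]
  have hsum : ∑ S ∈ E.powerset with T ⊆ S, subsetWeight p E S * subsetWeight q S T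
      = ∑ U ∈ (E \ T).powerset, (p * q) ^ T.card *
          ((p * (1 - q)) ^ U.card * (1 - p) ^ ((E \ T).card - U.card)) := by
    refine Finset.sum_nbij' (fun S => S \ T) (fun U => U ∪ T) ?_ ?_ ?_ ?_ ?_
    · intro S hS
      simp only [Finset.mem_filter, Finset.mem_powerset] at hS ⊢
      exact Finset.sdiff_subset_sdiff hS.1 le_rfl
    · intro U hU
      simp only [Finset.mem_filter, Finset.mem_powerset] at hU ⊢
      exact ⟨Finset.union_subset (hU.trans Finset.sdiff_subset) hT, Finset.subset_union_right⟩
    · intro S hS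
      simp only [Finset.mem_filter, Finset.mem_powerset] at hS
      exact Finset.sdiff_union_of_subset hS.2
    · intro U hU
      simp only [Finset.mem_powerset] at hU
      refine Finset.union_sdiff_cancel_right ?_
      exact Finset.disjoint_of_subset_left hU Finset.sdiff_disjoint
    · intro S hS
      simp only [Finset.mem_filter, Finset.mem_powerset] at hS
      have e1 := Finset.card_sdiff_add_card_eq_card hS.2
      have e2 := Finset.card_sdiff_add_card_eq_card hT
      have e3 : E.card - S.card = (E \ T).card - (S \ T).card := by omega
      have e4 : S.card - T.card = (S \ T).card := by omega
      unfold subsetWeight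
      rw [e3, e4, ← e1, mul_pow, mul_pow, pow_add]
      ring
  rw [hsum, ← Finset.mul_sum, Finset.sum_pow_mul_eq_add_pow, subsetWeight,
    Finset.card_sdiff_of_subset hT]
  congr 2
  ring

/-- If every `S ⊆ E` in `B` has a small set `D` such that all its subsets meeting `D` in fewer
than `t` elements are in `B'`, then the probability of `B'` at density `p * q` is at least `c`
times the probability of `B` at density `p`. -/
lemma coupling_bound {α : Type} {p q c t : ℝ} (hp0 : 0 ≤ p) (hp1 : p ≤ 1) (h0 : 0 ≤ q)
    (h1 : q ≤ 1) (ht : 0 < t) (E : Finset α) (B B' : Finset α → Prop)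
    (hB : ∀ S ⊆ E, B S → ∃ D ⊆ S, q * D.card ≤ (1 - c) * t ∧
      ∀ T ⊆ S, ((T ∩ D).card : ℝ) < t → B' T) :
    c * ∑ S ∈ E.powerset, (if B S then subsetWeight p E S else 0)
      ≤ ∑ T ∈ E.powerset, (if B' T then subsetWeight (p * q) E T else 0) := by
  have hR : ∑ T ∈ E.powerset, (if B' T then subsetWeight (p * q) E T else 0)
      = ∑ S ∈ E.powerset, subsetWeight p E S *
          ∑ T ∈ S.powerset, (if B' T then subsetWeight q S T else 0) := by
    have e1 : ∀ T ∈ E.powerset, (if B' T then subsetWeight (p * q) E T else 0)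
        = ∑ S ∈ E.powerset, (if T ⊆ S then
            (if B' T then subsetWeight p E S * subsetWeight q S T else 0) else 0) := by
      intro T hT
      split_ifs with h
      · exact (sum_supersets p q E T (Finset.mem_powerset.1 hT)).symm
      · simp
    rw [Finset.sum_congr rfl e1, Finset.sum_comm]
    refine Finset.sum_congr rfl fun S hS => ?_
    rw [← Finset.sum_filter, Finset.mul_sum]
    have e2 : (E.powerset.filter fun T => T ⊆ S) = S.powerset := by
      ext T
      simp only [Finset.mem_filter, Finset.mem_powerset]
      exact ⟨fun h => h.2, fun h => ⟨h.trans (Finset.mem_powerset.1 hS), h⟩⟩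
    rw [e2]
    exact Finset.sum_congr rfl fun T _ => by rw [mul_ite, mul_zero]
  rw [hR, Finset.mul_sum]
  refine Finset.sum_le_sum fun S hS => ?_
  have hw := subsetWeight_nonneg hp0 hp1 E S
  split_ifs with h
  · obtain ⟨D, hD, hDt, hDB⟩ := hB S (Finset.mem_powerset.1 hS) h
    rw [mul_comm]
    exact mul_le_mul_of_nonneg_left (markov_subset h0 h1 ht S D hD hDt B' hDB) hw
  · rw [mul_zero]
    refine mul_nonneg hw (Finset.sum_nonneg fun T _ => ?_)
    split_ifs
    · exact subsetWeight_nonneg h0 h1 S T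
    · exact le_rfl

/-! ### The binomial random graph as a random edge set -/

/-- The set of all pairs of distinct elements of `Fin n`. -/
noncomputable def allPairs (n : ℕ) : Finset (Sym2 (Fin n)) :=
  (⊤ : SimpleGraph (Fin n)).edgeFinset

lemma card_allPairs (n : ℕ) : (allPairs n).card = n.choose 2 := by
  rw [allPairs, SimpleGraph.card_edgeFinset_top_eq_card_choose_two, Fintype.card_fin]

lemma edgeSet_fromEdgeSet_of_subset {n : ℕ} {S : Finset (Sym2 (Fin n))} (hS : S ⊆ allPairs n) :
    (SimpleGraph.fromEdgeSet (S : Set (Sym2 (Fin n)))).edgeSet = S := by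
  rw [SimpleGraph.edgeSet_fromEdgeSet]
  ext e
  simp only [Set.mem_sdiff, Finset.mem_coe, and_iff_left_iff_imp]
  intro he
  simpa [allPairs] using hS he

lemma ncard_fromEdgeSet {n : ℕ} {S : Finset (Sym2 (Fin n))} (hS : S ⊆ allPairs n) :
    (SimpleGraph.fromEdgeSet (S : Set (Sym2 (Fin n)))).edgeSet.ncard = S.card := by
  rw [edgeSet_fromEdgeSet_of_subset hS, Set.ncard_coe_finset]

lemma gnpProb_eq_sum (n : ℕ) (p : ℝ) (Q : SimpleGraph (Fin n) → Prop) :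
    gnpProb (Fin n) p Q = ∑ S ∈ (allPairs n).powerset,
      (if Q (SimpleGraph.fromEdgeSet (S : Set (Sym2 (Fin n)))) then
        subsetWeight p (allPairs n) S else 0) := by
  unfold gnpProb
  symm
  refine Finset.sum_bij' (fun S _ => SimpleGraph.fromEdgeSet (S : Set (Sym2 (Fin n))))
    (fun G _ => G.edgeFinset) ?_ ?_ ?_ ?_ ?_
  · intro S _
    exact Finset.mem_univ _
  · intro G _
    rw [Finset.mem_powerset, allPairs]
    exact SimpleGraph.edgeFinset_mono le_top
  · intro S hS
    ext e
    -- `(_)` takes the `Fintype` instance from the goal; the synthesized one differs.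
    refine (@Set.mem_toFinset _ _ (_) _).trans ?_
    rw [edgeSet_fromEdgeSet_of_subset (Finset.mem_powerset.1 hS), Finset.mem_coe]
  · intro G _
    simp
  · intro S hS
    rw [ncard_fromEdgeSet (Finset.mem_powerset.1 hS), subsetWeight, card_allPairs,
      Fintype.card_fin]

lemma gnpProb_add_not (n : ℕ) (p : ℝ) (Q : SimpleGraph (Fin n) → Prop) :
    gnpProb (Fin n) p Q + gnpProb (Fin n) p (fun G => ¬ Q G) = 1 := by
  rw [gnpProb_eq_sum, gnpProb_eq_sum, ← Finset.sum_add_distrib,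
    ← sum_subsetWeight p (allPairs n)]
  refine Finset.sum_congr rfl fun S _ => ?_
  by_cases h : Q (SimpleGraph.fromEdgeSet (S : Set (Sym2 (Fin n)))) <;> simp [h]

lemma gnpProb_nonneg (n : ℕ) {p : ℝ} (h0 : 0 ≤ p) (h1 : p ≤ 1)
    (Q : SimpleGraph (Fin n) → Prop) : 0 ≤ gnpProb (Fin n) p Q := by
  rw [gnpProb_eq_sum]
  refine Finset.sum_nonneg fun S _ => ?_
  split_ifs
  · exact subsetWeight_nonneg h0 h1 _ S
  · exact le_rfl

/-! ### Resilience under sparsification -/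

/-- Resilience at least a nonpositive number is no condition at all. -/
lemma hasGlobalResilienceAtLeast_of_nonpos {n : ℕ} (G : SimpleGraph (Fin n))
    (P : SimpleGraph (Fin n) → Prop) {r : ℝ} (hr : r ≤ 0) :
    HasGlobalResilienceAtLeast G P r := by
  intro H hH h
  have : H.edgeSet.ncard ≤ G.edgeSet.ncard :=
    Set.ncard_le_ncard (SimpleGraph.edgeSet_mono hH) (Set.toFinite _)
  have : (H.edgeSet.ncard : ℝ) ≤ G.edgeSet.ncard := by exact_mod_cast this
  linarith

/-- The probability of failing resilience `r` at density `p` is controlled by that of failing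
resilience `r'` at density `p * q`, as soon as `q * r ≤ (1 - c) * r'`. -/
lemma not_resilient_bound {n : ℕ} {p q c r r' : ℝ} (hp0 : 0 ≤ p) (hp1 : p ≤ 1) (h0 : 0 ≤ q)
    (h1 : q ≤ 1) (hr' : 0 < r') (hrr : q * r ≤ (1 - c) * r') (P : SimpleGraph (Fin n) → Prop)
    (hmono : ∀ G H : SimpleGraph (Fin n), G ≤ H → P G → P H) :
    c * gnpProb (Fin n) p (fun G => ¬ HasGlobalResilienceAtLeast G P r)
      ≤ gnpProb (Fin n) (p * q) (fun G => ¬ HasGlobalResilienceAtLeast G P r') := by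
  rw [gnpProb_eq_sum, gnpProb_eq_sum]
  refine coupling_bound hp0 hp1 h0 h1 hr' (allPairs n)
    (fun S => ¬ HasGlobalResilienceAtLeast (SimpleGraph.fromEdgeSet (S : Set _)) P r)
    (fun S => ¬ HasGlobalResilienceAtLeast (SimpleGraph.fromEdgeSet (S : Set _)) P r') ?_
  intro S hS hbad
  unfold HasGlobalResilienceAtLeast at hbad
  push Not at hbad
  obtain ⟨H, hHS, hcard, hPH⟩ := hbad
  have hsub : H.edgeFinset ⊆ S := by
    intro e he
    have := SimpleGraph.edgeSet_mono hHS (SimpleGraph.mem_edgeFinset.1 he)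
    rwa [edgeSet_fromEdgeSet_of_subset hS] at this
  have hHcard : H.edgeSet.ncard = H.edgeFinset.card := by
    rw [← SimpleGraph.coe_edgeFinset, Set.ncard_coe_finset]
  refine ⟨S \ H.edgeFinset, Finset.sdiff_subset, ?_, ?_⟩
  · have e1 := Finset.card_sdiff_add_card_eq_card hsub
    have e2 : ((S \ H.edgeFinset).card : ℝ) + H.edgeFinset.card = S.card := by exact_mod_cast e1
    rw [ncard_fromEdgeSet hS, hHcard] at hcard
    exact (mul_le_mul_of_nonneg_left (by linarith) h0).trans hrr
  · intro T hT hlt hres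
    have hTE := hT.trans hS
    have hIE : T ∩ H.edgeFinset ⊆ allPairs n := Finset.inter_subset_left.trans hTE
    refine hPH (hmono (SimpleGraph.fromEdgeSet ((T ∩ H.edgeFinset : Finset _) : Set _)) H ?_
      (hres _ ?_ ?_))
    · rw [← SimpleGraph.edgeSet_subset_edgeSet, edgeSet_fromEdgeSet_of_subset hIE]
      intro e he
      exact SimpleGraph.mem_edgeFinset.1 (Finset.mem_inter.1 (Finset.mem_coe.1 he)).2
    · exact SimpleGraph.fromEdgeSet_mono (Finset.coe_subset.2 Finset.inter_subset_left)
    · rw [ncard_fromEdgeSet hTE, ncard_fromEdgeSet hIE]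
      have e1 : T ∩ (S \ H.edgeFinset) = T \ H.edgeFinset := by
        ext e
        simp only [Finset.mem_inter, Finset.mem_sdiff]
        exact ⟨fun h => ⟨h.1, h.2.2⟩, fun h => ⟨h.1, hT h.1, h.2⟩⟩
      -- `hlt` carries the classical `DecidableEq` instance, `e1` the structural one.
      have hlt' : ((T \ H.edgeFinset).card : ℝ) < r' := by
        rw [← e1]
        convert hlt
      have e2 := Finset.card_sdiff_add_card_inter T H.edgeFinset
      have e3 : ((T \ H.edgeFinset).card : ℝ) + (T ∩ H.edgeFinset).card = T.card := by
        exact_mod_cast e2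
      linarith

/-- If 0 < p'(n) ≤ p(n) ≤ 1, n²p'(n) → ∞, ε > 0 and P is a monotone increasing graph
property, then a.a.s. global resilience at least (1/2 − ε/2)·n²p'/2 of G(n,p') with respect
to P implies a.a.s. global resilience at least (1/2 − ε)·n²p/2 of G(n,p) with respect to P. -/
theorem resilience_monotone (p' p : ℕ → ℝ)
    (hpos : ∀ n : ℕ, 0 < p' n) (hle : ∀ n : ℕ, p' n ≤ p n) (hone : ∀ n : ℕ, p n ≤ 1)
    (hinf : Filter.Tendsto (fun n : ℕ => (n : ℝ)^2 * p' n) Filter.atTop Filter.atTop)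
    (ε : ℝ) (hε : 0 < ε)
    (P : (n : ℕ) → SimpleGraph (Fin n) → Prop)
    (hmono : ∀ (n : ℕ) (G H : SimpleGraph (Fin n)), G ≤ H → P n G → P n H)
    (haas : Filter.Tendsto
      (fun n : ℕ => gnpProb (Fin n) (p' n) (fun G =>
        HasGlobalResilienceAtLeast G (P n) ((1/2 - ε/2) * ((n : ℝ)^2 * p' n / 2))))
      Filter.atTop (nhds 1)) :
    Filter.Tendsto
      (fun n : ℕ => gnpProb (Fin n) (p n) (fun G =>
        HasGlobalResilienceAtLeast G (P n) ((1/2 - ε) * ((n : ℝ)^2 * p n / 2))))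
      Filter.atTop (nhds 1) := by
  rcases le_or_gt (1 / 2) ε with hbig | hsmall
  · have h1 : ∀ n : ℕ, gnpProb (Fin n) (p n) (fun G =>
        HasGlobalResilienceAtLeast G (P n) ((1/2 - ε) * ((n : ℝ)^2 * p n / 2))) = 1 := by
      intro n
      have hr : (1/2 - ε) * ((n : ℝ)^2 * p n / 2) ≤ 0 := by
        have := (hpos n).trans_le (hle n)
        exact mul_nonpos_of_nonpos_of_nonneg (by linarith) (by positivity)
      have hall : ∀ G : SimpleGraph (Fin n), HasGlobalResilienceAtLeast G (P n)
          ((1/2 - ε) * ((n : ℝ)^2 * p n / 2)) :=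
        fun G => hasGlobalResilienceAtLeast_of_nonpos G (P n) hr
      rw [gnpProb_eq_sum]
      refine Eq.trans ?_ (sum_subsetWeight (p n) (allPairs n))
      exact Finset.sum_congr rfl fun S _ => if_pos (hall _)
    simp only [h1]
    exact tendsto_const_nhds
  · have hden : 0 < 1/2 - ε/2 := by linarith
    set c : ℝ := 1 - (1/2 - ε) / (1/2 - ε/2) with hc
    have hcpos : 0 < c := by
      rw [hc, sub_pos, div_lt_one hden]
      linarith
    -- The failure probabilities at densities `p' n` and `p n`.
    set f' : ℕ → ℝ := fun n => gnpProb (Fin n) (p' n) (fun G =>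
      ¬ HasGlobalResilienceAtLeast G (P n) ((1/2 - ε/2) * ((n : ℝ)^2 * p' n / 2))) with hf'
    set f : ℕ → ℝ := fun n => gnpProb (Fin n) (p n) (fun G =>
      ¬ HasGlobalResilienceAtLeast G (P n) ((1/2 - ε) * ((n : ℝ)^2 * p n / 2))) with hf
    have hf'0 : Filter.Tendsto f' Filter.atTop (nhds 0) := by
      have h := haas.const_sub 1
      rw [sub_self] at h
      refine h.congr fun n => ?_
      rw [sub_eq_iff_eq_add']
      exact (gnpProb_add_not n (p' n) _).symm
    have hbound : ∀ᶠ n in Filter.atTop, f n ≤ f' n / c := by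
      filter_upwards [Filter.eventually_ge_atTop 1] with n hn
      have hp : 0 < p n := (hpos n).trans_le (hle n)
      have hn' : (0 : ℝ) < n := by exact_mod_cast hn
      have hp'n := hpos n
      rw [le_div_iff₀ hcpos, mul_comm]
      have hpq : p n * (p' n / p n) = p' n := by field_simp
      have h := not_resilient_bound (n := n) (p := p n) (q := p' n / p n) (c := c)
        (r := (1/2 - ε) * ((n : ℝ)^2 * p n / 2))
        (r' := (1/2 - ε/2) * ((n : ℝ)^2 * p' n / 2))
        hp.le (hone n) (by positivity) ((div_le_one hp).2 (hle n)) (by positivity)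
        (le_of_eq (by
          rw [hc, sub_sub_cancel, ← mul_assoc ((1/2 - ε) / (1/2 - ε/2)),
            div_mul_cancel₀ _ hden.ne']
          field_simp)) (P n) (hmono n)
      rwa [hpq] at h
    have hf0 : Filter.Tendsto f Filter.atTop (nhds 0) := by
      refine tendsto_of_tendsto_of_tendsto_of_le_of_le' tendsto_const_nhds
        (by simpa using hf'0.div_const c) (Filter.Eventually.of_forall fun n => ?_) hbound
      exact gnpProb_nonneg n ((hpos n).trans_le (hle n)).le (hone n) _
    have h := hf0.const_sub 1
    rw [sub_zero] at h
    refine h.congr fun n => ?_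
    rw [sub_eq_iff_eq_add]
    exact (gnpProb_add_not n (p n) _).symm
end

section
/- For every ε₀ > 0 there exists an integer n₀ such that for all ε' ≥ ε₀ and n ≥ n₀, every n-vertex graph G' with at least (1/2 + ε')·(n²−n)/2 edges contains, for every integer l with 0 ≤ l ≤ (ε'/16)n and every labeling of its vertex set with ℤ_n, at least (ε'/16)⁸ n⁴ l-shortcuts. -/
/-!
For `i₁ = x` and `i₂ = y` fixed, `i₃` has to be a neighbour of `x` such that `i₃ + 1` is a neighbour
of `y + 1`, and `i₄` a neighbour of `x + 1` such that `i₄ + l + 1` is a neighbour of `y`. Hence there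
are at least `d(x) + d(y + 1) - n` candidates for `i₃` and `d(x + 1) + d(y) - n` for `i₄`
(`degree_add_degree_le`). If `y` follows `x` at clockwise distance `s`, the required cyclic order
(type (i) or type (ii), depending on which of `i₃`, `i₄` comes first) excludes only
`s + 3` and `s + 2l + 6` candidates (`card_thirdSet`, `card_fourthSet`), and it guarantees that no
edge of the shortcut lies on the Hamilton cycle (`isShortcutTuple_of_offsets`).

It remains to find many pairs `(x, y)` at distance at most `εn/4` for which both degree sums are at
least `(1 + 3ε/4) n`. The average of `d(x) + d(x + 1)` is at least `(1 + 2ε)(n - 1)`, so at least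
`2εn/5` vertices have `d(x) + d(x + 1) ≥ (1 + ε) n` (`card_heavy`). By pigeonhole, `ε³n/64` of them
agree in position and in degree up to `εn/4` (`exists_cluster`). For two such vertices `x`, `y`,
replacing `d(x)` by `d(y)` or conversely loses at most `εn/4`, so both mixed sums are large. Finally,
a shortcut comes from at most `8⁴` quadruples (`card_le_mul_card_image_shortcut`), and the powers of
two fit: `2⁻¹² · 2⁻² · 2⁻⁴ · 2⁻¹² ≥ 16⁻⁸`.
-/

open Filter Topology Classical

/-- The clockwise arc length from `a` to `b` on the discrete circle `ZMod n`. -/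
def arcDist {n : ℕ} (a b : ZMod n) : ℕ := (b - a).val

/-- The points of `L` are all distinct and lie in this clockwise cyclic order
on the discrete circle `ZMod n` (the consecutive clockwise arcs, including the
wrap-around arc, sum to exactly `n`). -/
def InClockwiseOrder {n : ℕ} (L : List (ZMod n)) : Prop :=
  L.Nodup ∧ ((L.zip (L.rotate 1)).map fun q => arcDist q.1 q.2).sum = n

/-- The Hamilton cycle `C_n` on vertex set `ZMod n`, with edges `{i, i+1}`. -/
def cycleGraph (n : ℕ) : SimpleGraph (ZMod n) :=
  SimpleGraph.fromEdgeSet {e | ∃ i : ZMod n, e = s(i, i + 1)}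

/-- The four edges of the `l`-shortcut determined by `i₁ i₂ i₃ i₄`. -/
def shortcutEdges {n : ℕ} (l : ℕ) (i₁ i₂ i₃ i₄ : ZMod n) : Finset (Sym2 (ZMod n)) :=
  {s(i₁, i₃), s(i₁ + 1, i₄), s(i₂, i₄ + (l : ZMod n) + 1), s(i₂ + 1, i₃ + 1)}

/-- `(i₁, i₂, i₃, i₄)` determines an `l`-shortcut (of type (i) or type (ii)) in `K_n ∖ C_n`. -/
def IsShortcutTuple {n : ℕ} (l : ℕ) (i₁ i₂ i₃ i₄ : ZMod n) : Prop :=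
  (InClockwiseOrder [i₁, i₁ + 1, i₂, i₂ + 1, i₃, i₃ + 1, i₄, i₄ + (l : ZMod n) + 1] ∨
   InClockwiseOrder [i₁, i₁ + 1, i₂, i₂ + 1, i₄, i₄ + (l : ZMod n) + 1, i₃, i₃ + 1]) ∧
  ∀ e ∈ shortcutEdges l i₁ i₂ i₃ i₄, e ∉ (cycleGraph n).edgeSet

/-- The edge set `S` is an `l`-shortcut. -/
def IsShortcut {n : ℕ} (l : ℕ) (S : Finset (Sym2 (ZMod n))) : Prop :=
  ∃ i₁ i₂ i₃ i₄ : ZMod n, IsShortcutTuple l i₁ i₂ i₃ i₄ ∧ S = shortcutEdges l i₁ i₂ i₃ i₄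

/-- The number of `l`-shortcuts all of whose edges belong to the edge set `U`. -/
noncomputable def shortcutCountIn {n : ℕ} (l : ℕ) (U : Set (Sym2 (ZMod n))) : ℕ :=
  {S : Finset (Sym2 (ZMod n)) | IsShortcut l S ∧ (S : Set (Sym2 (ZMod n))) ⊆ U}.ncard

/-- `G` contains an `l`-shortcut. -/
def ContainsShortcut {n : ℕ} (l : ℕ) (G : SimpleGraph (ZMod n)) : Prop :=
  ∃ i₁ i₂ i₃ i₄ : ZMod n, IsShortcutTuple l i₁ i₂ i₃ i₄ ∧
    (shortcutEdges l i₁ i₂ i₃ i₄ : Set (Sym2 (ZMod n))) ⊆ G.edgeSet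

/-! ### Shortcuts in coordinates -/

theorem natCast_inj_of_lt {n a b : ℕ} (ha : a < n) (hb : b < n)
    (h : (a : ZMod n) = (b : ZMod n)) : a = b := by
  have h2 := (ZMod.natCast_eq_natCast_iff' a b n).1 h
  rwa [Nat.mod_eq_of_lt ha, Nat.mod_eq_of_lt hb] at h2

theorem arcDist_offset {n a b : ℕ} (x : ZMod n) (hab : a ≤ b) (hb : b < n) :
    arcDist (x + (a : ZMod n)) (x + (b : ZMod n)) = b - a := by
  have h : (x + b - (x + a) : ZMod n) = ((b - a : ℕ) : ZMod n) := by
    rw [Nat.cast_sub hab]; ring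
  rw [arcDist, h, ZMod.val_natCast_of_lt (by omega)]

theorem arcDist_offset_wrap {n a b : ℕ} (x : ZMod n) (hab : a < b) (hb : b < n) :
    arcDist (x + (b : ZMod n)) (x + (a : ZMod n)) = n - (b - a) := by
  have h : (x + a - (x + b) : ZMod n) = ((n - (b - a) : ℕ) : ZMod n) := by
    rw [Nat.cast_sub (by omega), Nat.cast_sub hab.le, ZMod.natCast_self]; ring
  rw [arcDist, h, ZMod.val_natCast_of_lt (by omega)]

/-- Points given by strictly increasing offsets below `n` from a base point are in clockwise
order. -/
theorem clockwise_of_offsets {n : ℕ} (x : ZMod n) {a b c d e f g h : ℕ}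
    (hab : a < b) (hbc : b < c) (hcd : c < d) (hde : d < e) (hef : e < f) (hfg : f < g)
    (hgh : g < h) (hn : h < n) :
    InClockwiseOrder [x + (a : ZMod n), x + (b : ZMod n), x + (c : ZMod n), x + (d : ZMod n),
      x + (e : ZMod n), x + (f : ZMod n), x + (g : ZMod n), x + (h : ZMod n)] := by
  constructor
  · have key : ([a, b, c, d, e, f, g, h].map fun k : ℕ => x + (k : ZMod n)).Nodup := by
      apply List.Nodup.map_on
      · intro u hu v hv huv
        simp only [List.mem_cons, List.not_mem_nil, or_false] at hu hv
        exact natCast_inj_of_lt (by omega) (by omega) (add_left_cancel huv)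
      · simp only [List.nodup_cons, List.mem_cons, List.not_mem_nil, or_false, not_false_eq_true,
          List.nodup_nil, and_true]
        omega
    simpa using key
  · simp only [List.rotate_cons_succ, List.rotate_zero, List.cons_append, List.nil_append,
      List.zip_cons_cons, List.zip_nil_right, List.map_cons, List.map_nil, List.sum_cons,
      List.sum_nil]
    rw [arcDist_offset x hab.le (by omega), arcDist_offset x hbc.le (by omega),
      arcDist_offset x hcd.le (by omega), arcDist_offset x hde.le (by omega),
      arcDist_offset x hef.le (by omega), arcDist_offset x hfg.le (by omega),
      arcDist_offset x hgh.le (by omega), arcDist_offset_wrap x (by omega) hn]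
    omega

/-- Two points at clockwise distance between `2` and `n - 2` are not joined by an edge of the
Hamilton cycle. -/
theorem not_mem_cycle_of_offsets {n : ℕ} (x : ZMod n) {a b : ℕ} (hab : a + 2 ≤ b) (hb : b < n)
    (hw : b + 2 ≤ a + n) : s(x + (a : ZMod n), x + (b : ZMod n)) ∉ (cycleGraph n).edgeSet := by
  intro h
  rw [cycleGraph, SimpleGraph.edgeSet_fromEdgeSet] at h
  obtain ⟨⟨i, hi⟩, -⟩ := h
  rcases Sym2.eq_iff.1 hi with ⟨h1, h2⟩ | ⟨h1, h2⟩
  · rw [← h1, add_assoc] at h2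
    have h3 : (b : ZMod n) = ((a + 1 : ℕ) : ZMod n) := by
      push_cast; exact add_left_cancel h2
    have := natCast_inj_of_lt hb (by omega) h3
    omega
  · rw [← h2, add_assoc] at h1
    have h3 : (a : ZMod n) = ((b + 1 : ℕ) : ZMod n) := by
      push_cast; exact add_left_cancel h1
    rcases Nat.lt_or_ge (b + 1) n with hlt | hge
    · have := natCast_inj_of_lt (by omega) hlt h3
      omega
    · have hbn : b + 1 = n := by omega
      rw [hbn, ZMod.natCast_self] at h3
      rw [← Nat.cast_zero] at h3
      have := natCast_inj_of_lt (n := n) (a := a) (b := 0) (by omega) (by omega) h3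
      omega

/-- Coordinate description of shortcuts, relative to `i₁`: the offsets `s, p, q` of
`i₂, i₃, i₄`. -/
theorem isShortcutTuple_of_offsets {n l : ℕ} (x : ZMod n) {s p q : ℕ} (hs : 2 ≤ s)
    (hp : s + 2 ≤ p) (hp' : p + 1 < n) (hq : s + 2 ≤ q) (hq' : q + l + 1 < n)
    (hpq : p + 2 ≤ q ∨ q + l + 2 ≤ p) :
    IsShortcutTuple l x (x + (s : ZMod n)) (x + (p : ZMod n)) (x + (q : ZMod n)) := by
  have e0 : x = x + ((0 : ℕ) : ZMod n) := by simp
  have e1 : x + 1 = x + ((1 : ℕ) : ZMod n) := by simp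
  have es : ∀ k : ℕ, x + (k : ZMod n) + 1 = x + ((k + 1 : ℕ) : ZMod n) := by
    intro k; push_cast; ring
  have el : x + (q : ZMod n) + (l : ZMod n) + 1 = x + ((q + l + 1 : ℕ) : ZMod n) := by
    push_cast; ring
  constructor
  · rw [el, es, es, e1]
    rcases hpq with hpq | hpq
    · left
      have := clockwise_of_offsets x (a := 0) (b := 1) (c := s) (d := s + 1) (e := p) (f := p + 1)
        (g := q) (h := q + l + 1) (by omega) (by omega) (by omega) (by omega) (by omega) (by omega)
        (by omega) (by omega)
      rwa [← e0] at this
    · right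
      have := clockwise_of_offsets x (a := 0) (b := 1) (c := s) (d := s + 1) (e := q)
        (f := q + l + 1) (g := p) (h := p + 1) (by omega) (by omega) (by omega) (by omega)
        (by omega) (by omega) (by omega) (by omega)
      rwa [← e0] at this
  · intro e he
    rw [shortcutEdges, el, es, es, e1] at he
    simp only [Finset.mem_insert, Finset.mem_singleton] at he
    rcases he with rfl | rfl | rfl | rfl
    · have := not_mem_cycle_of_offsets x (a := 0) (b := p) (by omega) (by omega) (by omega)
      rwa [← e0] at this
    · exact not_mem_cycle_of_offsets x (by omega) (by omega) (by omega)
    · exact not_mem_cycle_of_offsets x (by omega) (by omega) (by omega)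
    · exact not_mem_cycle_of_offsets x (by omega) (by omega) (by omega)

/-! ### Multiplicity of the parametrisation -/

/-- The vertices incident with an edge of `S`. -/
noncomputable def edgeVerts {n : ℕ} (S : Finset (Sym2 (ZMod n))) : Finset (ZMod n) :=
  S.biUnion fun e => e.toFinset

theorem card_edgeVerts_shortcut {n l : ℕ} (i₁ i₂ i₃ i₄ : ZMod n) :
    (edgeVerts (shortcutEdges l i₁ i₂ i₃ i₄)).card ≤ 8 := by
  have h1 : (shortcutEdges l i₁ i₂ i₃ i₄).card ≤ 4 := Finset.card_le_four
  have h2 : (edgeVerts (shortcutEdges l i₁ i₂ i₃ i₄)).card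
      ≤ (shortcutEdges l i₁ i₂ i₃ i₄).card * 2 := by
    apply Finset.card_biUnion_le_card_mul
    intro e _
    rw [Sym2.card_toFinset]
    split_ifs <;> omega
  omega

/-- At most `8⁴` quadruples determine the same edge set: each entry of the quadruple is one of
the at most eight vertices of the shortcut. -/
theorem card_le_mul_card_image_shortcut {n l : ℕ}
    (T : Finset (ZMod n × ZMod n × ZMod n × ZMod n)) :
    T.card ≤ 4096 *
      (T.image fun t => shortcutEdges l t.1 t.2.1 t.2.2.1 t.2.2.2).card := by
  apply Finset.card_le_mul_card_image
  intro S hS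
  obtain ⟨t₀, -, rfl⟩ := Finset.mem_image.1 hS
  set S := shortcutEdges l t₀.1 t₀.2.1 t₀.2.2.1 t₀.2.2.2 with hSdef
  have hV : (edgeVerts S).card ≤ 8 := card_edgeVerts_shortcut _ _ _ _
  have hsub : (T.filter fun t => shortcutEdges l t.1 t.2.1 t.2.2.1 t.2.2.2 = S) ⊆
      edgeVerts S ×ˢ edgeVerts S ×ˢ edgeVerts S ×ˢ edgeVerts S := by
    rintro ⟨a, b, c, d⟩ ht
    have hts := (Finset.mem_filter.1 ht).2
    simp only [Finset.mem_product]
    rw [← hts]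
    simp [edgeVerts, shortcutEdges]
  refine (Finset.card_le_card hsub).trans ?_
  simp only [Finset.card_product]
  calc _ ≤ 8 * (8 * (8 * 8)) := by gcongr
    _ = 4096 := by norm_num

/-! ### Counting the third and fourth vertex -/

/-- Two neighbourhoods, one of them shifted by `c`, meet in at least `d(u) + d(v) - n` points. -/
theorem degree_add_degree_le {n : ℕ} [NeZero n] (G : SimpleGraph (ZMod n)) (u v c : ZMod n) :
    G.degree u + G.degree v ≤
      (Finset.univ.filter fun p => G.Adj u p ∧ G.Adj v (p + c)).card + n := by
  have h1 : (Finset.univ.filter fun p => G.Adj u p).card = G.degree u := by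
    rw [← SimpleGraph.card_neighborFinset_eq_degree]
    congr 1
    ext p
    simp
  have h2 : (Finset.univ.filter fun p => G.Adj v (p + c)).card = G.degree v := by
    rw [← SimpleGraph.card_neighborFinset_eq_degree]
    apply Finset.card_bij (fun p _ => p + c)
    · intro p hp
      simpa using hp
    · intro p _ q _ h
      exact add_right_cancel h
    · intro q hq
      exact ⟨q - c, by simpa using hq, by ring⟩
  have h3 := Finset.card_union_add_card_inter (Finset.univ.filter fun p => G.Adj u p)
    (Finset.univ.filter fun p => G.Adj v (p + c))
  rw [← Finset.filter_and, h1, h2] at h3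
  have h4 := Finset.card_le_univ ((Finset.univ.filter fun p => G.Adj u p) ∪
    (Finset.univ.filter fun p => G.Adj v (p + c)))
  rw [ZMod.card] at h4
  omega

/-- Discarding the points whose offset from `x` lies in `R` costs at most `|R|` points. -/
theorem card_le_card_filter_offset {n : ℕ} [NeZero n] (A : Finset (ZMod n)) (x : ZMod n)
    (R : Finset ℕ) : A.card ≤ (A.filter fun p => (p - x).val ∉ R).card + R.card := by
  have h := Finset.card_filter_add_card_filter_not (s := A) (fun p => (p - x).val ∈ R)
  have h2 : (A.filter fun p => (p - x).val ∈ R).card ≤ R.card := by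
    apply Finset.card_le_card_of_injOn (fun p => (p - x).val)
    · intro p hp
      exact (Finset.mem_filter.1 hp).2
    · intro p _ q _ hpq
      exact sub_left_injective (ZMod.val_injective n hpq)
  omega

/-- Candidates for `i₃`, given `i₁ = x` and `i₂ = y` at clockwise distance `s`. -/
noncomputable def thirdSet {n : ℕ} [NeZero n] (G : SimpleGraph (ZMod n)) (x y : ZMod n) (s : ℕ) :
    Finset (ZMod n) :=
  (Finset.univ.filter fun p => G.Adj x p ∧ G.Adj (y + 1) (p + 1)).filter fun p =>
    (p - x).val ∉ Finset.range (s + 2) ∪ {n - 1}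

/-- Candidates for `i₄`, given also `i₃ = p`. The arc from `i₄` to `i₄ + l + 1` must avoid both
the arc from `x` to `y + 1` and the two points `p`, `p + 1`. -/
noncomputable def fourthSet {n : ℕ} [NeZero n] (G : SimpleGraph (ZMod n)) (l : ℕ) (x y : ZMod n)
    (s : ℕ) (p : ZMod n) : Finset (ZMod n) :=
  (Finset.univ.filter fun q => G.Adj (x + 1) q ∧ G.Adj y (q + ((l : ZMod n) + 1))).filter fun q =>
    (q - x).val ∉ Finset.range (s + 2) ∪ Finset.Ico (n - (l + 1)) n ∪
      Finset.Ico ((p - x).val - (l + 1)) ((p - x).val + 2)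

theorem card_thirdSet {n : ℕ} [NeZero n] (G : SimpleGraph (ZMod n)) (x y : ZMod n) (s : ℕ) :
    G.degree x + G.degree (y + 1) ≤ (thirdSet G x y s).card + n + s + 3 := by
  have h1 := degree_add_degree_le G x (y + 1) 1
  have h2 := card_le_card_filter_offset
    (Finset.univ.filter fun p => G.Adj x p ∧ G.Adj (y + 1) (p + 1)) x
    (Finset.range (s + 2) ∪ {n - 1})
  have h3 := Finset.card_union_le (Finset.range (s + 2)) {n - 1}
  rw [Finset.card_range, Finset.card_singleton] at h3
  rw [thirdSet]
  omega

theorem card_fourthSet {n : ℕ} [NeZero n] (G : SimpleGraph (ZMod n)) (l : ℕ) (x y : ZMod n)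
    (s : ℕ) (p : ZMod n) :
    G.degree (x + 1) + G.degree y ≤ (fourthSet G l x y s p).card + n + s + 2 * l + 6 := by
  have h1 := degree_add_degree_le G (x + 1) y ((l : ZMod n) + 1)
  have h2 := card_le_card_filter_offset
    (Finset.univ.filter fun q => G.Adj (x + 1) q ∧ G.Adj y (q + ((l : ZMod n) + 1))) x
    (Finset.range (s + 2) ∪ Finset.Ico (n - (l + 1)) n ∪
      Finset.Ico ((p - x).val - (l + 1)) ((p - x).val + 2))
  have h3 := Finset.card_union_le (Finset.range (s + 2) ∪ Finset.Ico (n - (l + 1)) n)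
    (Finset.Ico ((p - x).val - (l + 1)) ((p - x).val + 2))
  have h4 := Finset.card_union_le (Finset.range (s + 2)) (Finset.Ico (n - (l + 1)) n)
  rw [Finset.card_range] at h4
  simp only [Nat.card_Ico] at h3 h4
  rw [fourthSet]
  omega

theorem shortcut_of_mem {n l : ℕ} [NeZero n] (G : SimpleGraph (ZMod n)) {x y p q : ZMod n}
    (hxy : x.val + 2 ≤ y.val)
    (hp : p ∈ thirdSet G x y (y.val - x.val)) (hq : q ∈ fourthSet G l x y (y.val - x.val) p) :
    IsShortcutTuple l x y p q ∧
      (shortcutEdges l x y p q : Set (Sym2 (ZMod n))) ⊆ G.edgeSet := by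
  simp only [thirdSet, fourthSet, Finset.mem_filter, Finset.mem_univ, true_and, Finset.mem_union,
    Finset.mem_range, Finset.mem_singleton, Finset.mem_Ico, not_or, not_and, not_lt] at hp hq
  obtain ⟨⟨hp1, hp2⟩, hp3, hp4⟩ := hp
  obtain ⟨⟨hq1, hq2⟩, ⟨hq3, hq4⟩, hq5⟩ := hq
  have hpn := ZMod.val_lt (p - x)
  have hqn := ZMod.val_lt (q - x)
  constructor
  · have ey : y = x + ((y.val - x.val : ℕ) : ZMod n) := by
      rw [Nat.cast_sub (by omega)]; simp
    have ep : p = x + ((p - x).val : ZMod n) := by simp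
    have eq : q = x + ((q - x).val : ZMod n) := by simp
    have := isShortcutTuple_of_offsets (l := l) x (s := y.val - x.val) (p := (p - x).val)
      (q := (q - x).val) (by omega) (by omega) (by omega) (by omega) (by omega) (by omega)
    rwa [← ey, ← ep, ← eq] at this
  · intro e he
    simp only [shortcutEdges, Finset.coe_insert, Finset.coe_singleton, Set.mem_insert_iff,
      Set.mem_singleton_iff] at he
    rcases he with rfl | rfl | rfl | rfl
    · exact hp1
    · exact hq1
    · rw [add_assoc]; exact hq2
    · exact hp2

/-- A family of pairs `(i₁, i₂)`, each with many candidates for `i₃` and `i₄`, yields many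
shortcuts. -/
theorem shortcut_count_of_pairs {n l k₃ k₄ : ℕ} [NeZero n] (G : SimpleGraph (ZMod n))
    (P : Finset (ZMod n × ZMod n)) (hP : ∀ z ∈ P, z.1.val + 2 ≤ z.2.val)
    (h3 : ∀ z ∈ P, k₃ ≤ (thirdSet G z.1 z.2 (z.2.val - z.1.val)).card)
    (h4 : ∀ z ∈ P, ∀ p, k₄ ≤ (fourthSet G l z.1 z.2 (z.2.val - z.1.val) p).card) :
    P.card * (k₃ * k₄) ≤ 4096 * shortcutCountIn l G.edgeSet := by
  set T₀ := P.sigma fun z => (thirdSet G z.1 z.2 (z.2.val - z.1.val)).sigma fun p =>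
    fourthSet G l z.1 z.2 (z.2.val - z.1.val) p with hT₀
  have hcard : P.card * (k₃ * k₄) ≤ T₀.card := by
    rw [hT₀, Finset.card_sigma, ← smul_eq_mul]
    apply Finset.card_nsmul_le_sum
    intro z hz
    rw [Finset.card_sigma]
    refine (Nat.mul_le_mul_right k₄ (h3 z hz)).trans ?_
    rw [← smul_eq_mul]
    exact Finset.card_nsmul_le_sum _ _ _ fun p _ => h4 z hz p
  set T : Finset (ZMod n × ZMod n × ZMod n × ZMod n) :=
    T₀.image fun t => (t.1.1, t.1.2, t.2.1, t.2.2) with hT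
  have hTc : T.card = T₀.card := by
    apply Finset.card_image_of_injective
    rintro ⟨⟨a, b⟩, c, d⟩ ⟨⟨a', b'⟩, c', d'⟩ h
    simp only [Prod.mk.injEq] at h
    obtain ⟨rfl, rfl, rfl, rfl⟩ := h
    rfl
  have hfib := card_le_mul_card_image_shortcut (l := l) T
  have hsub : (T.image fun t => shortcutEdges l t.1 t.2.1 t.2.2.1 t.2.2.2).card ≤
      shortcutCountIn l G.edgeSet := by
    rw [shortcutCountIn, ← Set.ncard_coe_finset]
    apply Set.ncard_le_ncard _ (Set.toFinite _)
    intro S hS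
    obtain ⟨t, ht, rfl⟩ := Finset.mem_image.1 (Finset.mem_coe.1 hS)
    obtain ⟨⟨⟨a, b⟩, c, d⟩, hu, rfl⟩ := Finset.mem_image.1 ht
    simp only [hT₀, Finset.mem_sigma] at hu
    obtain ⟨hu1, hu2, hu3⟩ := hu
    have := shortcut_of_mem G (hP _ hu1) hu2 hu3
    exact ⟨⟨a, b, c, d, this.1, rfl⟩, this.2⟩
  omega

/-! ### Many close pairs with similar degrees -/

/-- A set of `m` residues contains at least `(m² - 3m)/2` pairs `(x, y)` with `x + 2 ≤ y` for the
standard representatives. -/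
theorem card_separated_pairs {n : ℕ} [NeZero n] (T : Finset (ZMod n)) :
    T.card * T.card ≤
      2 * ((T ×ˢ T).filter fun z => z.1.val + 2 ≤ z.2.val).card + 3 * T.card := by
  set P := (T ×ˢ T).filter fun z => z.1.val + 2 ≤ z.2.val with hP
  set Q := (T ×ˢ T).filter fun z => z.2.val + 2 ≤ z.1.val with hQ
  set R := (T ×ˢ T).filter fun z => z.1.val ≤ z.2.val + 1 ∧ z.2.val ≤ z.1.val + 1 with hR
  have hPQ : Q.card = P.card := by
    apply Finset.card_bij (fun z _ => (z.2, z.1))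
    · intro z hz
      simp only [hP, hQ, Finset.mem_filter, Finset.mem_product] at hz ⊢
      tauto
    · rintro ⟨a, b⟩ _ ⟨c, d⟩ _ h
      simp only [Prod.mk.injEq] at h ⊢
      tauto
    · rintro ⟨a, b⟩ h
      refine ⟨(b, a), ?_, rfl⟩
      simp only [hP, hQ, Finset.mem_filter, Finset.mem_product] at h ⊢
      tauto
  have hRc : R.card ≤ T.card * 3 := by
    have : R.card ≤ (T ×ˢ Finset.range 3).card := by
      apply Finset.card_le_card_of_injOn (fun z => (z.1, z.2.val + 1 - z.1.val))
      · rintro ⟨a, b⟩ h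
        simp only [hR, Finset.coe_filter, Finset.mem_product, Set.mem_ofPred_eq] at h
        simp only [Finset.coe_product, Set.mem_prod, Finset.mem_coe, Finset.mem_range]
        exact ⟨h.1.1, by omega⟩
      · rintro ⟨a, b⟩ h ⟨c, d⟩ h' e
        simp only [hR, Finset.coe_filter, Finset.mem_product, Set.mem_ofPred_eq] at h h'
        simp only [Prod.mk.injEq] at e ⊢
        obtain ⟨rfl, e⟩ := e
        exact ⟨rfl, ZMod.val_injective n (by omega)⟩
    rwa [Finset.card_product, Finset.card_range] at this
  have hcov : T ×ˢ T ⊆ P ∪ Q ∪ R := by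
    intro z hz
    simp only [hP, hQ, hR, Finset.mem_union, Finset.mem_filter]
    rcases Nat.lt_or_ge z.1.val (z.2.val + 2) with h1 | h1
    · rcases Nat.lt_or_ge z.2.val (z.1.val + 2) with h2 | h2
      · exact Or.inr ⟨hz, by omega, by omega⟩
      · exact Or.inl (Or.inl ⟨hz, h2⟩)
    · exact Or.inl (Or.inr ⟨hz, h1⟩)
  have h1 := Finset.card_le_card hcov
  have h2 := Finset.card_union_le (P ∪ Q) R
  have h3 := Finset.card_union_le P Q
  rw [Finset.card_product] at h1
  omega

/-- Two reals in the same cell of width `w` differ by less than `w`. -/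
theorem lt_add_of_floor_eq {a b w : ℝ} (hw : 0 < w) (ha : 0 ≤ a)
    (h : ⌊a / w⌋₊ = ⌊b / w⌋₊) : b < a + w := by
  have h1 : b / w < ⌊b / w⌋₊ + 1 := Nat.lt_floor_add_one _
  have h2 : (⌊a / w⌋₊ : ℝ) ≤ a / w := Nat.floor_le (by positivity)
  rw [← h] at h1
  have h3 : b / w < a / w + 1 := by linarith
  rw [div_lt_iff₀ hw] at h3
  have : (a / w + 1) * w = a + w := by field_simp
  linarith

theorem sum_degrees_real {n : ℕ} [NeZero n] (G : SimpleGraph (ZMod n)) :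
    ∑ x, (G.degree x : ℝ) = 2 * (G.edgeSet.ncard : ℝ) := by
  have h := G.sum_degrees_eq_twice_card_edges
  rw [← SimpleGraph.coe_edgeFinset, Set.ncard_coe_finset]
  exact_mod_cast h

theorem degree_le_real {n : ℕ} [NeZero n] (G : SimpleGraph (ZMod n)) (x : ZMod n) :
    (G.degree x : ℝ) ≤ n - 1 := by
  have h := G.degree_lt_card_verts x
  rw [ZMod.card] at h
  have : (G.degree x : ℝ) + 1 ≤ n := by exact_mod_cast h
  linarith

/-- Consecutive vertices have degree sum at least `(1 + ε) n` for at least `2εn/5` vertices,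
by averaging. -/
theorem card_heavy {n : ℕ} [NeZero n] (G : SimpleGraph (ZMod n)) {ε : ℝ} (hε : ε ≤ 1 / 2)
    (hn : 1000 ≤ ε * n)
    (hG : (1/2 + ε) * (((n : ℝ)^2 - n) / 2) ≤ (G.edgeSet.ncard : ℝ)) :
    2 / 5 * ε * n ≤ ((Finset.univ.filter fun x : ZMod n =>
      (1 + ε) * n ≤ (G.degree x : ℝ) + G.degree (x + 1)).card : ℝ) := by
  set X := Finset.univ.filter fun x : ZMod n =>
      (1 + ε) * n ≤ (G.degree x : ℝ) + G.degree (x + 1) with hX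
  have hn0 : (0 : ℝ) < n := by exact_mod_cast Nat.pos_of_ne_zero (NeZero.ne n)
  have hε0 : 0 < ε := by
    by_contra h
    nlinarith
  have hsum : ∑ x : ZMod n, ((G.degree x : ℝ) + G.degree (x + 1)) =
      4 * (G.edgeSet.ncard : ℝ) := by
    have hshift : ∑ x : ZMod n, (G.degree (x + 1) : ℝ) = ∑ x : ZMod n, (G.degree x : ℝ) :=
      Equiv.sum_comp (Equiv.addRight (1 : ZMod n)) fun x => (G.degree x : ℝ)
    rw [Finset.sum_add_distrib, hshift, sum_degrees_real]; ring
  have hle : ∑ x : ZMod n, ((G.degree x : ℝ) + G.degree (x + 1)) ≤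
      ∑ x : ZMod n, ((1 + ε) * n + if x ∈ X then 2 * (n : ℝ) else 0) := by
    apply Finset.sum_le_sum
    intro x _
    have h1 := degree_le_real G x
    have h2 := degree_le_real G (x + 1)
    split_ifs with hx
    · have : 0 ≤ (1 + ε) * n := by positivity
      linarith
    · have : ¬ (1 + ε) * n ≤ (G.degree x : ℝ) + G.degree (x + 1) := by simpa [hX] using hx
      linarith
  rw [hsum, Finset.sum_add_distrib, Finset.sum_const, Finset.card_univ, ZMod.card,
    Finset.sum_ite_mem, Finset.univ_inter, Finset.sum_const, nsmul_eq_mul, nsmul_eq_mul] at hle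
  have key : ε * n - (1 + 2 * ε) ≤ 2 * (X.card : ℝ) := by
    have : n * (ε * n - (1 + 2 * ε)) ≤ n * (2 * (X.card : ℝ)) := by nlinarith
    exact le_of_mul_le_mul_left this hn0
  linarith

/-- Among the vertices with large consecutive degree sum, `ε³n/64` have nearly equal positions and
nearly equal degrees: pigeonhole over the cells of width `εn/4`. -/
theorem exists_cluster {n : ℕ} [NeZero n] (G : SimpleGraph (ZMod n)) {ε : ℝ} (hε : ε ≤ 1 / 2)
    (hn : 1000 ≤ ε * n)
    (hG : (1/2 + ε) * (((n : ℝ)^2 - n) / 2) ≤ (G.edgeSet.ncard : ℝ)) :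
    ∃ T : Finset (ZMod n), ε ^ 3 * n / 64 ≤ (T.card : ℝ) ∧
      (∀ x ∈ T, (1 + ε) * n ≤ (G.degree x : ℝ) + G.degree (x + 1)) ∧
      (∀ x ∈ T, ∀ y ∈ T, (y.val : ℝ) < x.val + ε * n / 4) ∧
      (∀ x ∈ T, ∀ y ∈ T, (G.degree y : ℝ) < G.degree x + ε * n / 4) := by
  have hX := card_heavy G hε hn hG
  set X := Finset.univ.filter fun x : ZMod n =>
      (1 + ε) * n ≤ (G.degree x : ℝ) + G.degree (x + 1) with hXdef
  have hn0 : (0 : ℝ) < n := by exact_mod_cast Nat.pos_of_ne_zero (NeZero.ne n)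
  have hε0 : 0 < ε := by
    by_contra h
    nlinarith
  set w : ℝ := ε * n / 4 with hw
  have hw0 : 0 < w := by positivity
  set K : ℕ := ⌊4 / ε⌋₊ + 1 with hK
  have hcell : ∀ a : ℝ, a ≤ n → ⌊a / w⌋₊ ∈ Finset.range K := by
    intro a ha
    rw [Finset.mem_range, hK, Nat.lt_succ_iff]
    apply Nat.floor_le_floor
    calc a / w ≤ n / w := by gcongr
      _ = 4 / ε := by rw [hw]; field_simp
  have hKε : (K : ℝ) * ε ≤ 9 / 2 := by
    have h1 : (⌊4 / ε⌋₊ : ℝ) ≤ 4 / ε := Nat.floor_le (by positivity)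
    have h2 : (K : ℝ) = ⌊4 / ε⌋₊ + 1 := by rw [hK]; push_cast; ring
    have h3 : (K : ℝ) * ε ≤ (4 / ε + 1) * ε := by rw [h2]; gcongr
    have h4 : (4 / ε + 1) * ε = 4 + ε := by field_simp
    linarith
  have hpig : ((Finset.range K ×ˢ Finset.range K).card) • (ε ^ 3 * n / 64) ≤ (X.card : ℝ) := by
    rw [Finset.card_product, Finset.card_range, nsmul_eq_mul]
    push_cast
    have h0 : 0 ≤ (K : ℝ) * ε := by positivity
    have h1 : ((K : ℝ) * ε) * (K * ε) ≤ 9 / 2 * (9 / 2) := by gcongr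
    calc (K : ℝ) * K * (ε ^ 3 * n / 64) = ((K : ℝ) * ε) * (K * ε) * (ε * n / 64) := by ring
      _ ≤ 9 / 2 * (9 / 2) * (ε * n / 64) := by gcongr
      _ ≤ 2 / 5 * ε * n := by nlinarith
      _ ≤ _ := hX
  obtain ⟨c, -, hc⟩ := Finset.exists_le_card_fiber_of_nsmul_le_card_of_maps_to
    (s := X) (t := Finset.range K ×ˢ Finset.range K)
    (f := fun x : ZMod n => (⌊(x.val : ℝ) / w⌋₊, ⌊(G.degree x : ℝ) / w⌋₊))
    (fun x _ => Finset.mem_product.2 ⟨hcell _ (by exact_mod_cast (ZMod.val_lt x).le),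
      hcell _ (by linarith [degree_le_real G x])⟩)
    ⟨(0, 0), by simp [hK]⟩ hpig
  refine ⟨_, hc, ?_, ?_, ?_⟩
  · intro x hx
    exact (Finset.mem_filter.1 (Finset.mem_filter.1 hx).1).2
  · intro x hx y hy
    have hxy := (Finset.mem_filter.1 hx).2.trans (Finset.mem_filter.1 hy).2.symm
    exact lt_add_of_floor_eq hw0 (Nat.cast_nonneg _) (Prod.mk.inj hxy).1
  · intro x hx y hy
    have hxy := (Finset.mem_filter.1 hx).2.trans (Finset.mem_filter.1 hy).2.symm
    exact lt_add_of_floor_eq hw0 (Nat.cast_nonneg _) (Prod.mk.inj hxy).2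

theorem eps_le_half {n : ℕ} [NeZero n] (G : SimpleGraph (ZMod n)) {ε : ℝ} (hn : 2 ≤ n)
    (hG : (1/2 + ε) * (((n : ℝ)^2 - n) / 2) ≤ (G.edgeSet.ncard : ℝ)) : ε ≤ 1 / 2 := by
  have h1 := sum_degrees_real G
  have h2 : ∑ x : ZMod n, (G.degree x : ℝ) ≤ ∑ _x : ZMod n, ((n : ℝ) - 1) :=
    Finset.sum_le_sum fun x _ => degree_le_real G x
  rw [Finset.sum_const, Finset.card_univ, ZMod.card, nsmul_eq_mul] at h2
  have hn' : (2 : ℝ) ≤ n := by exact_mod_cast hn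
  have hpos : 0 < (n : ℝ) * (n - 1) := by nlinarith
  have h3 : (1/2 + ε) * ((n : ℝ) * (n - 1)) ≤ 1 * ((n : ℝ) * (n - 1)) := by nlinarith
  linarith [le_of_mul_le_mul_right h3 hpos]

theorem shortcut_count_lower {n l : ℕ} [NeZero n] (G : SimpleGraph (ZMod n)) {ε : ℝ}
    (hε0 : 0 < ε) (hε : ε ≤ 1 / 2) (hn : 1000 ≤ ε ^ 3 * n)
    (hG : (1/2 + ε) * (((n : ℝ)^2 - n) / 2) ≤ (G.edgeSet.ncard : ℝ))
    (hl : (l : ℝ) ≤ ε / 16 * n) :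
    (ε / 16)^8 * (n : ℝ)^4 ≤ (shortcutCountIn l G.edgeSet : ℝ) := by
  have hn0 : (0 : ℝ) < n := by exact_mod_cast Nat.pos_of_ne_zero (NeZero.ne n)
  have hn1 : 1000 ≤ ε * n := by
    have : ε ^ 3 ≤ ε := by nlinarith [sq_nonneg ε]
    nlinarith
  obtain ⟨T, hT, hheavy, hpos, hdeg⟩ := exists_cluster G hε hn1 hG
  set P := (T ×ˢ T).filter fun z => z.1.val + 2 ≤ z.2.val with hP
  set k : ℕ := ⌈ε * n / 4⌉₊ with hk
  have hPc : ((ε ^ 3 * n / 64) ^ 2) / 4 ≤ (P.card : ℝ) := by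
    have h1 : (T.card : ℝ) * T.card ≤ 2 * P.card + 3 * T.card := by
      exact_mod_cast card_separated_pairs T
    have h2 : (10 : ℝ) ≤ ε ^ 3 * n / 64 := by linarith
    have h3 : (ε ^ 3 * n / 64) ^ 2 ≤ (T.card : ℝ) ^ 2 := by gcongr
    nlinarith
  have hmem : ∀ z ∈ P, z.1 ∈ T ∧ z.2 ∈ T ∧ z.1.val + 2 ≤ z.2.val := by
    intro z hz
    simpa [hP, and_assoc] using hz
  have hs : ∀ z ∈ P, ((z.2.val - z.1.val : ℕ) : ℝ) ≤ ε * n / 4 := by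
    intro z hz
    obtain ⟨h1, h2, h3⟩ := hmem z hz
    rw [Nat.cast_sub (by omega)]
    linarith [hpos _ h1 _ h2]
  have hcount := shortcut_count_of_pairs (l := l) (k₃ := k) (k₄ := k) G P
    (fun z hz => (hmem z hz).2.2)
    (by
      intro z hz
      obtain ⟨h1, h2, h3⟩ := hmem z hz
      apply Nat.ceil_le.2
      have hc : (G.degree z.1 : ℝ) + G.degree (z.2 + 1) ≤
          (thirdSet G z.1 z.2 (z.2.val - z.1.val)).card + n + (z.2.val - z.1.val : ℕ) + 3 := by
        exact_mod_cast card_thirdSet G z.1 z.2 (z.2.val - z.1.val)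
      linarith [hs z hz, hheavy _ h2, hdeg _ h1 _ h2])
    (by
      intro z hz p
      obtain ⟨h1, h2, h3⟩ := hmem z hz
      apply Nat.ceil_le.2
      have hc : (G.degree (z.1 + 1) : ℝ) + G.degree z.2 ≤
          (fourthSet G l z.1 z.2 (z.2.val - z.1.val) p).card + n + (z.2.val - z.1.val : ℕ)
            + 2 * l + 6 := by
        exact_mod_cast card_fourthSet G l z.1 z.2 (z.2.val - z.1.val) p
      linarith [hs z hz, hheavy _ h1, hdeg _ h2 _ h1])
  have hcount' : (P.card : ℝ) * (k * k) ≤ 4096 * shortcutCountIn l G.edgeSet := by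
    exact_mod_cast hcount
  have hk' : ε * n / 4 ≤ (k : ℝ) := Nat.le_ceil _
  have hprod : ((ε ^ 3 * n / 64) ^ 2) / 4 * (ε * n / 4 * (ε * n / 4)) ≤
      (P.card : ℝ) * (k * k) := by gcongr
  have hfin : 4096 * ((ε / 16)^8 * (n : ℝ)^4) ≤
      ((ε ^ 3 * n / 64) ^ 2) / 4 * (ε * n / 4 * (ε * n / 4)) := by
    have : 0 ≤ ε ^ 8 * (n : ℝ) ^ 4 := by positivity
    nlinarith
  linarith

/-- For every ε₀ > 0 there is n₀ such that for all ε' ≥ ε₀ and n ≥ n₀, every graph on the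
labeled vertex set `ZMod n` with at least (1/2 + ε')·(n²−n)/2 edges contains at least
(ε'/16)⁸·n⁴ `l`-shortcuts for every `0 ≤ l ≤ (ε'/16)·n`.  (Quantifying over all graphs on
the vertex set `ZMod n` amounts to quantifying over all labelings of an `n`-vertex graph.) -/
theorem shortcut_saturation (ε₀ : ℝ) (hε₀ : 0 < ε₀) :
    ∃ n₀ : ℕ, ∀ ε' : ℝ, ε₀ ≤ ε' → ∀ n : ℕ, n₀ ≤ n →
      ∀ G' : SimpleGraph (ZMod n),
        (1/2 + ε') * (((n : ℝ)^2 - n) / 2) ≤ (G'.edgeSet.ncard : ℝ) →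
        ∀ l : ℕ, (l : ℝ) ≤ ε' / 16 * n →
          (ε' / 16)^8 * (n : ℝ)^4 ≤ (shortcutCountIn l G'.edgeSet : ℝ) := by
  -- `n₀` is chosen so that `ε³ n ≥ 1000`, which absorbs all rounding errors.
  refine ⟨⌈1000 / ε₀ ^ 3⌉₊ + 2, ?_⟩
  intro ε hε n hn G hG l hl
  have : NeZero n := ⟨by omega⟩
  have hε0 : 0 < ε := hε₀.trans_le hε
  have hhalf := eps_le_half G (by omega) hG
  refine shortcut_count_lower G hε0 hhalf ?_ hG hl
  have h1 : 1000 / ε₀ ^ 3 ≤ (n : ℝ) :=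
    (Nat.le_ceil _).trans (by exact_mod_cast (by omega : ⌈1000 / ε₀ ^ 3⌉₊ ≤ n))
  rw [div_le_iff₀ (by positivity)] at h1
  calc (1000 : ℝ) ≤ n * ε₀ ^ 3 := h1
    _ ≤ n * ε ^ 3 := by gcongr
    _ = ε ^ 3 * n := by ring
end

section
/- Let f : (0,1) → (0,1) be the function f(ε') = (ε'/16)⁸. For every ε₀ > 0 there exist δ > 0 and an integer n₀ such that for all integers l and n with n ≥ n₀ and 0 ≤ l ≤ δn, the hypergraph H_n^l is (1/2, f, ε₀)-dense; that is, for every ε ≥ ε₀ and every subset U of E(K_n) with |U| ≥ (1/2 + ε)·|E(K_n)|, the number of l-shortcuts all four of whose edges lie in U is at least f(ε) times the total number of l-shortcuts in K_n. -/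
/-!
Write `d` for the degree in the graph `G` with edge set `U`. A quadruple gives a shortcut in `G` as
soon as `i₃ ∈ N(i₁)`, `i₃ + 1 ∈ N(i₂ + 1)`, `i₄ ∈ N(i₁ + 1)`, `i₄ + l + 1 ∈ N(i₂)` and all four
vertices `i₃, i₃ + 1, i₄, i₄ + l + 1` lie on the clockwise arc from `i₂` to `i₁`, away from its ends
and without interleaving. If `i₂` comes shortly after `i₁`, this arc is almost the whole circle, so
by inclusion–exclusion there are `Ω(ε² n²)` choices of `(i₃, i₄)` whenever both `d(i₁) + d(i₂ + 1)`
and `d(i₁ + 1) + d(i₂)` exceed `n` by a multiple of `ε n` (`card_extensions`).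

Suitable pairs `(i₁, i₂)` come from the pigeonhole principle. By averaging, about `ε n` vertices
satisfy `d(i) + d(i + 1) ≥ (1 + ε) n` (`card_good`). Sort them by position, into intervals of length
`ε n / 4`, and by the value of `d(i) - d(i + 1)`, up to `ε n / 2`. One of the at most `25 / ε²` cells
contains a proportion `ε² / 25` of these vertices (`exists_cell`). For `i₁, i₂` in one cell,
`2 (d(i₁) + d(i₂ + 1)) = (d(i₁) + d(i₁ + 1)) + (d(i₂) + d(i₂ + 1)) + (d(i₁) - d(i₁ + 1)) -
(d(i₂) - d(i₂ + 1)) ≥ (2 + 3 ε / 2) n`, and likewise for the other sum. This gives at least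
`ε⁸ n⁴ / 2²⁰` quadruples (`card_tuples`). Each edge set comes from at most `8⁴ = 2¹²` quadruples
(`card_fiber_le`), while there are at most `n⁴` shortcuts in total (`shortcutCountIn_le`), which
yields the factor `ε⁸ / 2³² = (ε / 16)⁸`.
-/

open Filter Topology Classical

/-- The edge set of the complete graph on `ZMod n` (the vertex set of the
hypergraph `H_n^l`). -/
def knEdges (n : ℕ) : Set (Sym2 (ZMod n)) := {e | ¬ e.IsDiag}

/-! ### Shortcut tuples in terms of clockwise offsets -/

lemma add_cast_inj {n : ℕ} [NeZero n] (a : ZMod n) {x y : ℕ} (hx : x < n) (hy : y < n)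
    (h : a + (x : ZMod n) = a + (y : ZMod n)) : x = y := by
  have h1 : (x : ZMod n) = (y : ZMod n) := add_left_cancel h
  have h2 := congrArg ZMod.val h1
  rwa [ZMod.val_cast_of_lt hx, ZMod.val_cast_of_lt hy] at h2

lemma arcDist_add_cast {n : ℕ} [NeZero n] (a : ZMod n) {x y : ℕ} (hxy : x ≤ y) (hy : y < n) :
    arcDist (a + (x : ZMod n)) (a + (y : ZMod n)) = y - x := by
  have h : a + (y : ZMod n) - (a + (x : ZMod n)) = ((y - x : ℕ) : ZMod n) := by
    rw [Nat.cast_sub hxy]; ring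
  rw [arcDist, h, ZMod.val_cast_of_lt (by omega)]

lemma arcDist_wrap {n : ℕ} [NeZero n] (a : ZMod n) {x : ℕ} (hx : x < n) (hx0 : 0 < x) :
    arcDist (a + (x : ZMod n)) (a + ((0 : ℕ) : ZMod n)) = n - x := by
  have h : a + ((0 : ℕ) : ZMod n) - (a + (x : ZMod n)) = ((n - x : ℕ) : ZMod n) := by
    rw [Nat.cast_sub hx.le]; simp
  rw [arcDist, h, ZMod.val_cast_of_lt (by omega)]

/-- Points whose clockwise offsets from a base point `a` increase are in clockwise order. -/
lemma inClockwiseOrder_offsets {n : ℕ} [NeZero n] (a : ZMod n) (x₁ x₂ x₃ x₄ x₅ x₆ x₇ : ℕ)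
    (h₁ : 0 < x₁) (h₂ : x₁ < x₂) (h₃ : x₂ < x₃) (h₄ : x₃ < x₄) (h₅ : x₄ < x₅) (h₆ : x₅ < x₆)
    (h₇ : x₆ < x₇) (h₈ : x₇ < n) :
    InClockwiseOrder [a + ((0 : ℕ) : ZMod n), a + (x₁ : ZMod n), a + (x₂ : ZMod n),
      a + (x₃ : ZMod n), a + (x₄ : ZMod n), a + (x₅ : ZMod n), a + (x₆ : ZMod n),
      a + (x₇ : ZMod n)] := by
  constructor
  · have key : (List.map (fun x : ℕ => a + (x : ZMod n))
        [0, x₁, x₂, x₃, x₄, x₅, x₆, x₇]).Nodup := by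
      apply List.Nodup.map_on
      · intro x hx y hy h
        simp only [List.mem_cons, List.not_mem_nil, or_false] at hx hy
        exact add_cast_inj a (by omega) (by omega) h
      · simp only [List.nodup_cons, List.mem_cons, List.not_mem_nil, or_false, not_false_eq_true,
          List.nodup_nil, and_true]
        omega
    exact key
  · have e : ∀ x y : ℕ, x < y → y < n →
        arcDist (a + (x : ZMod n)) (a + (y : ZMod n)) = y - x :=
      fun x y h h' => arcDist_add_cast a h.le h'
    simp only [List.rotate_cons_succ, List.rotate_zero, List.cons_append, List.nil_append,
      List.zip_cons_cons, List.zip_nil_left, List.map_cons, List.map_nil, List.sum_cons,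
      List.sum_nil]
    rw [e 0 x₁ h₁ (by omega), e x₁ x₂ h₂ (by omega), e x₂ x₃ h₃ (by omega),
      e x₃ x₄ h₄ (by omega), e x₄ x₅ h₅ (by omega), e x₅ x₆ h₆ (by omega), e x₆ x₇ h₇ h₈,
      arcDist_wrap a h₈ (by omega)]
    omega

lemma not_mem_cycleGraph {n : ℕ} [NeZero n] (a : ZMod n) {x y : ℕ} (hxy : x + 2 ≤ y)
    (hyx : y + 2 ≤ x + n) (hy : y < n) :
    s(a + (x : ZMod n), a + (y : ZMod n)) ∉ (cycleGraph n).edgeSet := by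
  intro h
  rw [cycleGraph, SimpleGraph.edgeSet_fromEdgeSet] at h
  obtain ⟨⟨i, hi⟩, -⟩ := h
  rw [Sym2.eq_iff] at hi
  rcases hi with ⟨h1, h2⟩ | ⟨h1, h2⟩
  · have h3 : a + ((x + 1 : ℕ) : ZMod n) = a + (y : ZMod n) := by
      rw [h2, ← h1]; push_cast; ring
    have := add_cast_inj a (by omega) hy h3
    omega
  · have h3 : a + ((y + 1 : ℕ) : ZMod n) = a + (x : ZMod n) := by
      rw [h1, ← h2]; push_cast; ring
    by_cases hn : y + 1 < n
    · have := add_cast_inj a hn (by omega) h3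
      omega
    · have hn' : y + 1 = n := by omega
      have h4 : a + ((0 : ℕ) : ZMod n) = a + (x : ZMod n) := by
        rw [← h3, hn']; simp
      have := add_cast_inj a (by omega) (by omega) h4
      omega

/-- A criterion for being a shortcut tuple in terms of the offsets `p, q, r` of `i₂, i₃, i₄`
from `i₁ = a`; both admissible orders of `i₃` and `i₄` are covered. -/
lemma isShortcutTuple_offsets {n : ℕ} [NeZero n] (l : ℕ) (a : ZMod n) (p q r : ℕ)
    (hp : 2 ≤ p) (hpq : p + 3 ≤ q) (hq : q + 3 ≤ n) (hpr : p + 3 ≤ r) (hr : r + l + 3 ≤ n)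
    (hqr : q + 2 ≤ r ∨ r + l + 2 ≤ q) :
    IsShortcutTuple l a (a + (p : ZMod n)) (a + (q : ZMod n)) (a + (r : ZMod n)) := by
  have e0 : a = a + ((0 : ℕ) : ZMod n) := by simp
  have e1 : a + 1 = a + ((1 : ℕ) : ZMod n) := by simp
  have ep : a + (p : ZMod n) + 1 = a + ((p + 1 : ℕ) : ZMod n) := by push_cast; ring
  have eq : a + (q : ZMod n) + 1 = a + ((q + 1 : ℕ) : ZMod n) := by push_cast; ring
  have er : a + (r : ZMod n) + (l : ZMod n) + 1 = a + ((r + l + 1 : ℕ) : ZMod n) := by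
    push_cast; ring
  refine ⟨?_, ?_⟩
  · rw [ep, eq, er, e1]
    rcases hqr with h | h
    · left
      have := inClockwiseOrder_offsets a 1 p (p + 1) q (q + 1) r (r + l + 1) (by omega) (by omega)
        (by omega) (by omega) (by omega) (by omega) (by omega) (by omega)
      rwa [← e0] at this
    · right
      have := inClockwiseOrder_offsets a 1 p (p + 1) r (r + l + 1) q (q + 1) (by omega) (by omega)
        (by omega) (by omega) (by omega) (by omega) (by omega) (by omega)
      rwa [← e0] at this
  · intro e he
    simp only [shortcutEdges, Finset.mem_insert, Finset.mem_singleton] at he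
    rcases he with rfl | rfl | rfl | rfl
    · have := not_mem_cycleGraph a (x := 0) (y := q) (by omega) (by omega) (by omega)
      rwa [← e0] at this
    · rw [e1]
      exact not_mem_cycleGraph a (by omega) (by omega) (by omega)
    · rw [er]
      exact not_mem_cycleGraph a (by omega) (by omega) (by omega)
    · rw [ep, eq]
      exact not_mem_cycleGraph a (by omega) (by omega) (by omega)

/-! ### Edge sets versus tuples -/

/-- The edge set spans at most eight vertices, and each entry of a tuple is one of them, so an
edge set arises from at most `8 ^ 4` tuples. -/
lemma card_fiber_le {n : ℕ} [NeZero n] (l : ℕ)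
    (T : Finset (ZMod n × ZMod n × ZMod n × ZMod n)) :
    T.card ≤ 4096 * (T.image fun t => shortcutEdges l t.1 t.2.1 t.2.2.1 t.2.2.2).card := by
  apply Finset.card_le_mul_card_image
  intro S hS
  obtain ⟨t, -, rfl⟩ := Finset.mem_image.mp hS
  obtain ⟨i₁, i₂, i₃, i₄⟩ := t
  let L : List (ZMod n) := [i₁, i₃, i₁ + 1, i₄, i₂, i₄ + (l : ZMod n) + 1, i₂ + 1, i₃ + 1]
  have hW : L.toFinset.card ≤ 8 := L.toFinset_card_le
  have hmem : ∀ e ∈ shortcutEdges l i₁ i₂ i₃ i₄, ∀ v ∈ e, v ∈ L.toFinset := by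
    intro e he v hv
    simp only [shortcutEdges, Finset.mem_insert, Finset.mem_singleton] at he
    rcases he with rfl | rfl | rfl | rfl <;> rw [Sym2.mem_iff] at hv <;>
      rcases hv with rfl | rfl <;> simp [L]
  calc _ ≤ (L.toFinset ×ˢ L.toFinset ×ˢ L.toFinset ×ˢ L.toFinset).card := by
        apply Finset.card_le_card
        rintro ⟨j₁, j₂, j₃, j₄⟩ hj
        have hj := (Finset.mem_filter.mp hj).2
        simp only at hj
        rw [← hj] at hmem
        simp only [Finset.mem_product]
        refine ⟨hmem s(j₁, j₃) ?_ _ ?_, hmem s(j₂, j₄ + (l : ZMod n) + 1) ?_ _ ?_,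
          hmem s(j₁, j₃) ?_ _ ?_, hmem s(j₁ + 1, j₄) ?_ _ ?_⟩ <;> simp [shortcutEdges]
    _ ≤ 8 * (8 * (8 * 8)) := by
        simp only [Finset.card_product]
        gcongr
    _ = 4096 := by norm_num

lemma shortcutCountIn_le {n : ℕ} [NeZero n] (l : ℕ) (U : Set (Sym2 (ZMod n))) :
    shortcutCountIn l U ≤ n ^ 4 := by
  let φ : ZMod n × ZMod n × ZMod n × ZMod n → Finset (Sym2 (ZMod n)) :=
    fun t => shortcutEdges l t.1 t.2.1 t.2.2.1 t.2.2.2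
  calc shortcutCountIn l U ≤ (Finset.univ.image φ).card := by
        rw [shortcutCountIn, ← Set.ncard_coe_finset]
        apply Set.ncard_le_ncard _ (Finset.finite_toSet _)
        rintro S ⟨⟨i₁, i₂, i₃, i₄, -, rfl⟩, -⟩
        simp only [Finset.coe_image, Finset.coe_univ, Set.image_univ, Set.mem_range]
        exact ⟨(i₁, i₂, i₃, i₄), rfl⟩
    _ ≤ n ^ 4 := by
        refine Finset.card_image_le.trans (le_of_eq ?_)
        simp only [Finset.card_univ, Fintype.card_prod, ZMod.card]
        ring

lemma card_le_shortcutCountIn {n : ℕ} [NeZero n] (l : ℕ) (U : Set (Sym2 (ZMod n)))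
    (T : Finset (ZMod n × ZMod n × ZMod n × ZMod n))
    (hT : ∀ t ∈ T, IsShortcutTuple l t.1 t.2.1 t.2.2.1 t.2.2.2 ∧
      (shortcutEdges l t.1 t.2.1 t.2.2.1 t.2.2.2 : Set (Sym2 (ZMod n))) ⊆ U) :
    T.card ≤ 4096 * shortcutCountIn l U := by
  refine (card_fiber_le l T).trans (Nat.mul_le_mul_left _ ?_)
  rw [shortcutCountIn, ← Set.ncard_coe_finset]
  apply Set.ncard_le_ncard _ (Set.toFinite _)
  intro S hS
  obtain ⟨t, ht, rfl⟩ := Finset.mem_image.mp (Finset.mem_coe.mp hS)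
  exact ⟨⟨_, _, _, _, (hT t ht).1, rfl⟩, (hT t ht).2⟩

/-! ### Extending a pair `(i₁, i₂)` to shortcuts -/

lemma card_mul_le_of_fibers {α β : Type*} [DecidableEq β] (S : Finset α) (P : Finset β)
    (f : α → β) (Y : ℕ) (h : ∀ b ∈ P, Y ≤ (S.filter fun x => f x = b).card) :
    P.card * Y ≤ S.card := by
  calc P.card * Y ≤ ∑ b ∈ P, (S.filter fun x => f x = b).card := by
        simpa using Finset.card_nsmul_le_sum P _ Y h
    _ = (S.filter fun x => f x ∈ P).card := Finset.sum_card_fiberwise_eq_card_filter S P f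
    _ ≤ S.card := Finset.card_filter_le _ _

/-- Inclusion–exclusion for `A` and the translate `B - s`. -/
lemma card_inter_shift {n : ℕ} [NeZero n] (A B : Finset (ZMod n)) (s : ZMod n) :
    A.card + B.card ≤ n + (Finset.univ.filter fun c => c ∈ A ∧ c + s ∈ B).card := by
  have h1 : (B.image fun c => c - s).card = B.card :=
    Finset.card_image_of_injective _ (sub_left_injective)
  have h2 := Finset.card_union_add_card_inter A (B.image fun c => c - s)
  have h3 : (A ∪ B.image fun c => c - s).card ≤ n := by
    simpa [ZMod.card] using Finset.card_le_univ (A ∪ B.image fun c => c - s)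
  have h4 : (A ∩ B.image fun c => c - s) ⊆
      Finset.univ.filter fun c => c ∈ A ∧ c + s ∈ B := by
    intro c hc
    rw [Finset.mem_inter, Finset.mem_image] at hc
    obtain ⟨hA, b, hb, rfl⟩ := hc
    simp [hA, hb]
  have h5 := Finset.card_le_card h4
  omega

/-- Prescribing a set `bad` of forbidden offsets from `a` removes at most `bad.card` points. -/
lemma card_le_avoid {n : ℕ} [NeZero n] (C : Finset (ZMod n)) (a : ZMod n) (bad : Finset ℕ) :
    C.card ≤ (C.filter fun c => (c - a).val ∉ bad).card + bad.card := by
  have h1 := Finset.card_filter_add_card_filter_not (s := C) (fun c => (c - a).val ∉ bad)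
  have h2 : (C.filter fun c => ¬ (c - a).val ∉ bad).card ≤ bad.card := by
    apply Finset.card_le_card_of_injOn (fun c => (c - a).val)
    · intro c hc
      simpa using (Finset.mem_filter.mp hc).2
    · intro x _ y _ h
      exact sub_left_injective (ZMod.val_injective n h)
  omega

/-- If the degree sums `d(i₁) + d(i₂ + 1)` and `d(i₁ + 1) + d(i₂)` both exceed `n` by enough, then
`i₁ = a`, `i₂ = a + p` extend to many shortcuts inside `G`: the two pairs of neighbourhoods
(suitably shifted) intersect in many choices for `i₃` and `i₄`. -/
lemma card_extensions {n : ℕ} [NeZero n] (G : SimpleGraph (ZMod n)) (l p Y : ℕ) (a : ZMod n)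
    (hp : 2 ≤ p)
    (h1 : n + Y + p + l + 8 ≤
      (G.neighborFinset a).card + (G.neighborFinset (a + (p : ZMod n) + 1)).card)
    (h2 : n + Y + p + l + 8 ≤
      (G.neighborFinset (a + 1)).card + (G.neighborFinset (a + (p : ZMod n))).card) :
    Y * Y ≤ (Finset.univ.filter fun t : ZMod n × ZMod n =>
      IsShortcutTuple l a (a + (p : ZMod n)) t.1 t.2 ∧
      (shortcutEdges l a (a + (p : ZMod n)) t.1 t.2 : Set (Sym2 (ZMod n))) ⊆ G.edgeSet).card := by
  -- `D` holds the choices for `i₄`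
  let D := (Finset.univ.filter fun d => d ∈ G.neighborFinset (a + 1) ∧
    d + ((l : ZMod n) + 1) ∈ G.neighborFinset (a + (p : ZMod n))).filter
      fun d => (d - a).val ∉ Finset.range (p + 3) ∪ Finset.Ico (n - (l + 2)) n
  have hD : Y ≤ D.card := by
    have k1 := card_inter_shift (G.neighborFinset (a + 1)) (G.neighborFinset (a + (p : ZMod n)))
      ((l : ZMod n) + 1)
    have k2 := card_le_avoid (Finset.univ.filter fun d => d ∈ G.neighborFinset (a + 1) ∧
      d + ((l : ZMod n) + 1) ∈ G.neighborFinset (a + (p : ZMod n))) a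
      (Finset.range (p + 3) ∪ Finset.Ico (n - (l + 2)) n)
    have k3 := Finset.card_union_le (Finset.range (p + 3)) (Finset.Ico (n - (l + 2)) n)
    simp only [Finset.card_range, Nat.card_Ico] at k3
    simp only [D]
    omega
  refine (Nat.mul_le_mul_right Y hD).trans (card_mul_le_of_fibers _ D Prod.snd Y ?_)
  intro d hd
  simp only [D, Finset.mem_filter, Finset.mem_univ, true_and, Finset.mem_union, Finset.mem_range,
    Finset.mem_Ico, SimpleGraph.mem_neighborFinset, not_or, not_and, not_lt] at hd
  obtain ⟨⟨hd1, hd2⟩, hd3, hd4⟩ := hd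
  obtain ⟨r, hr⟩ : ∃ r, r = (d - a).val := ⟨_, rfl⟩
  have hrn : r < n := hr ▸ ZMod.val_lt _
  have hdr : d = a + (r : ZMod n) := by rw [hr, ZMod.natCast_zmod_val]; ring
  rw [← hr] at hd3 hd4
  have hrl : r + l + 3 ≤ n := by
    by_contra hcon
    exact absurd (hd4 (by omega)) (by omega)
  -- the last interval keeps `i₃, i₃ + 1` off the arc from `i₄` to `i₄ + l + 1`
  let bad := Finset.range (p + 3) ∪ Finset.Ico (n - 2) n ∪ Finset.Ico (r - 1) (r + l + 2)
  let C := (Finset.univ.filter fun c => c ∈ G.neighborFinset a ∧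
    c + 1 ∈ G.neighborFinset (a + (p : ZMod n) + 1)).filter fun c => (c - a).val ∉ bad
  have hC : Y ≤ C.card := by
    have k1 := card_inter_shift (G.neighborFinset a) (G.neighborFinset (a + (p : ZMod n) + 1)) 1
    have k2 := card_le_avoid (Finset.univ.filter fun c => c ∈ G.neighborFinset a ∧
      c + 1 ∈ G.neighborFinset (a + (p : ZMod n) + 1)) a bad
    have k3 := Finset.card_union_le (Finset.range (p + 3)) (Finset.Ico (n - 2) n)
    have k4 := Finset.card_union_le (Finset.range (p + 3) ∪ Finset.Ico (n - 2) n)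
      (Finset.Ico (r - 1) (r + l + 2))
    simp only [Finset.card_range, Nat.card_Ico] at k3 k4
    simp only [C]
    simp only [bad] at k2 ⊢
    omega
  refine hC.trans (Finset.card_le_card_of_injOn (fun c => (c, d)) ?_ ?_)
  · intro c hc
    simp only [C, bad, Finset.coe_filter, Finset.mem_filter, Finset.mem_univ, true_and,
      Finset.mem_union, Finset.mem_range, Finset.mem_Ico, SimpleGraph.mem_neighborFinset, not_or,
      not_and, not_lt, Set.mem_ofPred_eq] at hc
    obtain ⟨⟨hc1, hc2⟩, ⟨hc3, hc4⟩, hc5⟩ := hc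
    obtain ⟨q, hq⟩ : ∃ q, q = (c - a).val := ⟨_, rfl⟩
    have hqn : q < n := hq ▸ ZMod.val_lt _
    have hcq : c = a + (q : ZMod n) := by rw [hq, ZMod.natCast_zmod_val]; ring
    rw [← hq] at hc3 hc4 hc5
    have hq3 : q + 3 ≤ n := by
      by_contra hcon
      exact absurd (hc4 (by omega)) (by omega)
    have hqr : q + 2 ≤ r ∨ r + l + 2 ≤ q := by
      by_contra hcon
      push Not at hcon
      exact absurd (hc5 (by omega)) (by omega)
    simp only [Finset.coe_filter, Finset.mem_filter, Finset.mem_univ, true_and, and_true,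
      Set.mem_ofPred_eq]
    refine ⟨?_, ?_⟩
    · rw [hcq, hdr]
      exact isShortcutTuple_offsets l a p q r hp hc3 hq3 hd3 hrl hqr
    · intro e he
      simp only [shortcutEdges, Finset.coe_insert, Finset.coe_singleton, Set.mem_insert_iff,
        Set.mem_singleton_iff] at he
      rcases he with rfl | rfl | rfl | rfl
      · exact hc1
      · exact hd1
      · rw [add_assoc]; exact hd2
      · exact hc2
  · intro x _ y _ h
    exact (Prod.mk.inj h).1

/-! ### Finding pairs `(i₁, i₂)` -/

/-- All but `3 |T|` of the pairs in `T × T` are at least two apart, and half of these are in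
increasing order. -/
lemma card_ordered_pairs {n : ℕ} [NeZero n] (T : Finset (ZMod n)) :
    T.card * T.card ≤
      2 * ((T ×ˢ T).filter fun t => t.1.val + 2 ≤ t.2.val).card + 3 * T.card := by
  set P := (T ×ˢ T).filter fun t => t.1.val + 2 ≤ t.2.val with hP
  have hsub : T ×ˢ T ⊆ P ∪ P.image Prod.swap ∪ T.image (fun i => (i, i)) ∪
      T.image (fun i => (i, i + 1)) ∪ T.image (fun i => (i + 1, i)) := by
    rintro ⟨i, j⟩ h
    have hT := Finset.mem_product.mp h
    have hsucc : ∀ x y : ZMod n, y.val = x.val + 1 → y = x + 1 := by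
      intro x y hxy
      have := congrArg (Nat.cast : ℕ → ZMod n) hxy
      simpa using this
    simp only [Finset.mem_union, Finset.mem_image]
    rcases lt_trichotomy i.val j.val with h1 | h1 | h1
    · by_cases h2 : j.val = i.val + 1
      · left; right
        exact ⟨i, hT.1, by rw [hsucc i j h2]⟩
      · left; left; left; left
        exact Finset.mem_filter.mpr ⟨h, by simp only; omega⟩
    · left; left; right
      exact ⟨i, hT.1, by rw [ZMod.val_injective n h1]⟩
    · by_cases h2 : i.val = j.val + 1
      · right
        exact ⟨j, hT.2, by rw [hsucc j i h2]⟩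
      · left; left; left; right
        exact ⟨(j, i), Finset.mem_filter.mpr
          ⟨Finset.mem_product.mpr ⟨hT.2, hT.1⟩, by simp only; omega⟩, rfl⟩
  have h0 := Finset.card_le_card hsub
  rw [Finset.card_product] at h0
  have u1 := Finset.card_union_le (P ∪ P.image Prod.swap ∪ T.image (fun i => (i, i)) ∪
      T.image (fun i => (i, i + 1))) (T.image (fun i => (i + 1, i)))
  have u2 := Finset.card_union_le (P ∪ P.image Prod.swap ∪ T.image (fun i => (i, i)))
      (T.image (fun i => (i, i + 1)))
  have u3 := Finset.card_union_le (P ∪ P.image Prod.swap) (T.image (fun i => (i, i)))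
  have u4 := Finset.card_union_le P (P.image Prod.swap)
  have i1 : (P.image Prod.swap).card ≤ P.card := Finset.card_image_le
  have i2 : (T.image (fun i => (i, i))).card ≤ T.card := Finset.card_image_le
  have i3 : (T.image (fun i => (i, i + 1))).card ≤ T.card := Finset.card_image_le
  have i4 : (T.image (fun i => (i + 1, i))).card ≤ T.card := Finset.card_image_le
  omega

/-- By averaging, at least `ε n - 2` vertices `i` satisfy `d(i) + d(i + 1) ≥ (1 + ε) n`. -/
lemma card_good {n : ℕ} [NeZero n] (d : ZMod n → ℝ) (ε : ℝ) (hε : 0 < ε) (hε1 : ε ≤ 1 / 2)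
    (hd : ∀ i, d i ≤ n) (hsum : (1 / 2 + ε) * (n * (n - 1)) ≤ ∑ i, d i) :
    ε * n - 2 ≤ ((Finset.univ.filter fun i => (1 + ε) * n ≤ d i + d (i + 1)).card : ℝ) := by
  have hn : (0 : ℝ) < n := by exact_mod_cast Nat.pos_of_ne_zero (NeZero.ne n)
  set g := (Finset.univ.filter fun i => (1 + ε) * n ≤ d i + d (i + 1)).card with hg
  have h1 : ∑ i, (d i + d (i + 1)) = 2 * ∑ i, d i := by
    have hshift : ∑ i, d (i + 1) = ∑ i, d i := Equiv.sum_comp (Equiv.addRight (1 : ZMod n)) d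
    rw [Finset.sum_add_distrib, hshift]
    ring
  -- every summand is at most `2 n`, and below `(1 + ε) n` outside the good set
  have h2 : ∑ i, (d i + d (i + 1)) ≤
      ∑ i, ((1 + ε) * n + if (1 + ε) * n ≤ d i + d (i + 1) then (1 - ε) * n else 0) := by
    apply Finset.sum_le_sum
    intro i _
    have := hd i
    have := hd (i + 1)
    split_ifs with h
    · nlinarith
    · linarith
  rw [h1, Finset.sum_add_distrib, ← Finset.sum_filter, Finset.sum_const, Finset.sum_const,
    ← hg, Finset.card_univ, ZMod.card, nsmul_eq_mul, nsmul_eq_mul] at h2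
  have h3 : n * ((1 + 2 * ε) * (n - 1)) ≤ n * ((1 + ε) * n + g * (1 - ε)) := by
    nlinarith
  have h4 := le_of_mul_le_mul_left h3 hn
  have h5 : (0 : ℝ) ≤ g := Nat.cast_nonneg _
  nlinarith

lemma abs_sub_le_of_floor_eq {x y c : ℝ} (hc : 0 < c) (hx : 0 ≤ x) (hy : 0 ≤ y)
    (h : ⌊x / c⌋₊ = ⌊y / c⌋₊) : |x - y| ≤ c := by
  have hx1 := Nat.floor_le (div_nonneg hx hc.le)
  have hx2 := Nat.lt_floor_add_one (x / c)
  have hy1 := Nat.floor_le (div_nonneg hy hc.le)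
  have hy2 := Nat.lt_floor_add_one (y / c)
  rw [h] at hx1 hx2
  have h1 : x / c - y / c ≤ 1 := by linarith
  have h2 : y / c - x / c ≤ 1 := by linarith
  rw [← sub_div, div_le_one hc] at h1 h2
  rw [abs_le]
  constructor <;> linarith

/-- Pigeonhole: some proportion `ε² / 25` of `S` lies in a short interval of the circle and has
nearly constant degree difference `d(i) - d(i + 1)`. -/
lemma exists_cell {n : ℕ} [NeZero n] (d : ZMod n → ℝ) (ε : ℝ) (hε : 0 < ε) (hε1 : ε ≤ 1 / 2)
    (hd0 : ∀ i, 0 ≤ d i) (hd : ∀ i, d i ≤ n) (S : Finset (ZMod n)) :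
    ∃ T ⊆ S, ε ^ 2 / 25 * (S.card : ℝ) ≤ T.card ∧ ∀ i ∈ T, ∀ j ∈ T,
      |(i.val : ℝ) - j.val| ≤ ε * n / 4 ∧
      |(d i - d (i + 1)) - (d j - d (j + 1))| ≤ ε * n / 2 := by
  have hn : (0 : ℝ) < n := by exact_mod_cast Nat.pos_of_ne_zero (NeZero.ne n)
  have hc4 : 0 < ε * n / 4 := by positivity
  have hc2 : 0 < ε * n / 2 := by positivity
  have hz : ∀ i, 0 ≤ d i - d (i + 1) + n := fun i => by
    have := hd0 i
    have := hd (i + 1)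
    linarith
  let k := ⌊4 / ε⌋₊ + 1
  let κ : ZMod n → ℕ × ℕ := fun i =>
    (⌊(i.val : ℝ) / (ε * n / 4)⌋₊, ⌊(d i - d (i + 1) + n) / (ε * n / 2)⌋₊)
  have hk : (k : ℝ) ≤ 5 / ε := by
    have h1 : (k : ℝ) ≤ 4 / ε + 1 := by
      simp only [k]
      push_cast
      linarith [Nat.floor_le (show 0 ≤ 4 / ε by positivity)]
    have h2 : 1 ≤ 1 / ε := by rw [le_div_iff₀ hε]; linarith
    have h3 : 5 / ε = 4 / ε + 1 / ε := by ring
    linarith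
  have hmaps : ∀ i ∈ S, κ i ∈ Finset.range k ×ˢ Finset.range k := by
    intro i _
    simp only [κ, k, Finset.mem_product, Finset.mem_range, Nat.lt_succ_iff]
    constructor
    · apply Nat.floor_le_floor
      have : (i.val : ℝ) ≤ n := by exact_mod_cast (ZMod.val_lt i).le
      rw [div_le_div_iff₀ hc4 hε]
      nlinarith
    · apply Nat.floor_le_floor
      have := hd i
      have := hd0 (i + 1)
      rw [div_le_div_iff₀ hc2 hε]
      nlinarith
  have hcard : (Finset.range k ×ˢ Finset.range k).card • (ε ^ 2 / 25 * (S.card : ℝ)) ≤ S.card := by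
    rw [Finset.card_product, Finset.card_range, nsmul_eq_mul]
    push_cast
    have h1 : (k : ℝ) * ε ≤ 5 := by rwa [le_div_iff₀ hε] at hk
    have h2 : ((k : ℝ) * ε) ^ 2 ≤ 5 ^ 2 := by gcongr
    have h3 : (0 : ℝ) ≤ S.card := Nat.cast_nonneg _
    have h4 : (k : ℝ) * k * (ε ^ 2 / 25 * (S.card : ℝ)) = (k * ε) ^ 2 / 25 * S.card := by ring
    rw [h4]
    nlinarith
  obtain ⟨y, -, hy⟩ := Finset.exists_le_card_fiber_of_nsmul_le_card_of_maps_to hmaps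
    ⟨(0, 0), by simp [k]⟩ hcard
  refine ⟨_, Finset.filter_subset _ _, hy, ?_⟩
  intro i hi j hj
  have hij : κ i = κ j := (Finset.mem_filter.mp hi).2.trans (Finset.mem_filter.mp hj).2.symm
  constructor
  · exact abs_sub_le_of_floor_eq hc4 (Nat.cast_nonneg _) (Nat.cast_nonneg _)
      (congrArg Prod.fst hij)
  · have := abs_sub_le_of_floor_eq hc2 (hz i) (hz j) (congrArg Prod.snd hij)
    rwa [add_sub_add_right_eq_sub] at this

lemma card_knEdges (n : ℕ) [NeZero n] : ((knEdges n).ncard : ℝ) = n * (n - 1) / 2 := by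
  have h : (knEdges n).ncard = n.choose 2 := by
    have := Sym2.card_subtype_not_diag (α := ZMod n)
    rw [ZMod.card] at this
    rw [← this, ← Nat.card_coe_set_eq, Nat.card_eq_fintype_card]
    exact Fintype.card_congr (Equiv.refl _)
  rw [h, Nat.cast_choose_two]

lemma edgeSet_eq {n : ℕ} (U : Set (Sym2 (ZMod n))) (hU : U ⊆ knEdges n) :
    (SimpleGraph.fromEdgeSet U).edgeSet = U := by
  rw [SimpleGraph.edgeSet_fromEdgeSet]
  exact sdiff_eq_left.mpr (Set.disjoint_left.mpr fun e he hd => hU he hd)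

lemma sum_degrees {n : ℕ} [NeZero n] (U : Set (Sym2 (ZMod n))) (G : SimpleGraph (ZMod n))
    (hG : G.edgeSet = U) : ∑ i, ((G.neighborFinset i).card : ℝ) = 2 * (U.ncard : ℝ) := by
  have h := G.sum_degrees_eq_twice_card_edges
  have h2 : G.edgeFinset.card = U.ncard := by
    rw [← Set.ncard_coe_finset, SimpleGraph.coe_edgeFinset, hG]
  rw [h2] at h
  exact_mod_cast h

/-! ### Counting -/

/-- The counting core: many shortcut tuples inside a graph of density `1/2 + ε`, provided `ε n`
is large and `l` is small compared to it. -/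
lemma card_tuples {n : ℕ} [NeZero n] (l : ℕ) (ε : ℝ) (hε : 0 < ε) (hε1 : ε ≤ 1 / 2)
    (hn : 1000 ≤ ε ^ 3 * n) (hl : (l : ℝ) ≤ ε / 100 * n) (G : SimpleGraph (ZMod n))
    (hG : (1 / 2 + ε) * (n * (n - 1)) ≤ ∑ i, ((G.neighborFinset i).card : ℝ)) :
    ε ^ 8 / 2 ^ 20 * (n : ℝ) ^ 4 ≤
      ((Finset.univ.filter fun t : ZMod n × ZMod n × ZMod n × ZMod n =>
      IsShortcutTuple l t.1 t.2.1 t.2.2.1 t.2.2.2 ∧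
      (shortcutEdges l t.1 t.2.1 t.2.2.1 t.2.2.2 : Set (Sym2 (ZMod n))) ⊆ G.edgeSet).card : ℝ) := by
  have hn0 : (0 : ℝ) < n := by exact_mod_cast Nat.pos_of_ne_zero (NeZero.ne n)
  have hεn : 4000 ≤ ε * n := by
    have : ε ^ 2 ≤ 1 / 4 := by nlinarith
    have h0 : 0 < ε * n := by positivity
    nlinarith
  let d : ZMod n → ℝ := fun i => ((G.neighborFinset i).card : ℝ)
  have hd0 : ∀ i, 0 ≤ d i := fun i => Nat.cast_nonneg _
  have hd : ∀ i, d i ≤ n := fun i => by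
    have := Finset.card_le_univ (G.neighborFinset i)
    rw [ZMod.card] at this
    simp only [d]
    exact_mod_cast this
  have hgood := card_good d ε hε hε1 hd hG
  obtain ⟨T, hTS, hTcard, hT⟩ := exists_cell d ε hε hε1 hd0 hd
    (Finset.univ.filter fun i => (1 + ε) * n ≤ d i + d (i + 1))
  have hm : ε ^ 3 * n / 50 ≤ (T.card : ℝ) := by
    have h1 : ε * n / 2 ≤
        ((Finset.univ.filter fun i => (1 + ε) * n ≤ d i + d (i + 1)).card : ℝ) := by linarith
    calc ε ^ 3 * n / 50 = ε ^ 2 / 25 * (ε * n / 2) := by ring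
      _ ≤ _ := mul_le_mul_of_nonneg_left h1 (by positivity)
      _ ≤ _ := hTcard
  have hpairs := card_ordered_pairs T
  set P := (T ×ˢ T).filter fun t => t.1.val + 2 ≤ t.2.val with hP
  have hPcard : ε ^ 6 * n ^ 2 / 7500 ≤ (P.card : ℝ) := by
    have h1 : (T.card : ℝ) * T.card ≤ 2 * P.card + 3 * T.card := by exact_mod_cast hpairs
    have h2 : (20 : ℝ) ≤ T.card := by linarith
    have h3 : (T.card : ℝ) ^ 2 / 3 ≤ P.card := by nlinarith
    have h4 : (ε ^ 3 * n / 50) ^ 2 ≤ (T.card : ℝ) ^ 2 := by gcongr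
    have h5 : (ε ^ 3 * n / 50) ^ 2 = ε ^ 6 * n ^ 2 / 2500 := by ring
    linarith
  let Y := ⌈ε * n / 4⌉₊
  have hY1 : ε * n / 4 ≤ Y := Nat.le_ceil _
  have hY2 : (Y : ℝ) < ε * n / 4 + 1 := Nat.ceil_lt_add_one (by positivity)
  have key := card_mul_le_of_fibers
    (Finset.univ.filter fun t : ZMod n × ZMod n × ZMod n × ZMod n =>
      IsShortcutTuple l t.1 t.2.1 t.2.2.1 t.2.2.2 ∧
      (shortcutEdges l t.1 t.2.1 t.2.2.1 t.2.2.2 : Set (Sym2 (ZMod n))) ⊆ G.edgeSet)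
    P (fun t => (t.1, t.2.1)) (Y * Y) (by
      rintro ⟨i, j⟩ hij
      obtain ⟨hij1, hij2⟩ := Finset.mem_filter.mp hij
      obtain ⟨hi, hj⟩ := Finset.mem_product.mp hij1
      simp only at hi hj hij2
      have hgi := (Finset.mem_filter.mp (hTS hi)).2
      have hgj := (Finset.mem_filter.mp (hTS hj)).2
      obtain ⟨hv, hz⟩ := hT i hi j hj
      obtain ⟨p, hp⟩ : ∃ p, j.val = i.val + p := ⟨j.val - i.val, by omega⟩
      have hjp : j = i + (p : ZMod n) := by
        have := congrArg (Nat.cast : ℕ → ZMod n) hp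
        simpa using this
      have hpε : (p : ℝ) ≤ ε * n / 4 := by
        have h1 := (abs_le.mp hv).1
        rw [hp] at h1
        push_cast at h1
        linarith
      rw [abs_le] at hz
      -- both sums are at least `(1 + 3 ε / 4) n`, by combining `hgi`, `hgj` and `hz`
      have s1 : ((n + Y + p + l + 8 : ℕ) : ℝ) ≤ d i + d (j + 1) := by
        push_cast
        nlinarith [hz.1, hz.2]
      have s2 : ((n + Y + p + l + 8 : ℕ) : ℝ) ≤ d (i + 1) + d j := by
        push_cast
        nlinarith [hz.1, hz.2]
      subst hjp
      simp only [d] at s1 s2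
      refine (card_extensions G l p Y i (by omega) (by exact_mod_cast s1)
        (by exact_mod_cast s2)).trans ?_
      refine Finset.card_le_card_of_injOn (fun t => (i, i + (p : ZMod n), t.1, t.2)) ?_ ?_
      · intro t ht
        simpa using ht
      · intro x _ y _ h
        simpa [Prod.ext_iff] using h)
  refine le_trans ?_ (Nat.cast_le (α := ℝ).mpr key)
  push_cast
  calc ε ^ 8 / 2 ^ 20 * (n : ℝ) ^ 4 ≤ (ε ^ 6 * n ^ 2 / 7500) * ((ε * n / 4) * (ε * n / 4)) := by
        have h : (ε ^ 6 * n ^ 2 / 7500) * ((ε * n / 4) * (ε * n / 4)) =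
            ε ^ 8 / 120000 * (n : ℝ) ^ 4 := by ring
        rw [h]
        gcongr
        norm_num
    _ ≤ _ := by gcongr

/-- Density of the shortcut hypergraphs: for every ε₀ > 0 there exist δ > 0 and n₀ such that
for all n ≥ n₀ and 0 ≤ l ≤ δn, the hypergraph `H_n^l` is (1/2, f, ε₀)-dense with
f(ε) = (ε/16)⁸: every `U ⊆ E(K_n)` with `|U| ≥ (1/2 + ε)|E(K_n)|` contains at least
`f(ε)` times the total number of `l`-shortcuts. -/
theorem shortcut_hypergraph_dense (ε₀ : ℝ) (hε₀ : 0 < ε₀) :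
    ∃ δ : ℝ, 0 < δ ∧ ∃ n₀ : ℕ, ∀ n l : ℕ, n₀ ≤ n → (l : ℝ) ≤ δ * n →
      ∀ ε : ℝ, ε₀ ≤ ε → ∀ U : Set (Sym2 (ZMod n)), U ⊆ knEdges n →
        (1/2 + ε) * ((knEdges n).ncard : ℝ) ≤ (U.ncard : ℝ) →
        (ε / 16)^8 * (shortcutCountIn l (knEdges n) : ℝ) ≤ (shortcutCountIn l U : ℝ) := by
  refine ⟨ε₀ / 100, by positivity, ⌈1000 / ε₀ ^ 3⌉₊ + 2, ?_⟩
  intro n l hn hl ε hε U hU hUcard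
  have : NeZero n := ⟨by omega⟩
  have hεpos : 0 < ε := hε₀.trans_le hε
  have hn2 : (2 : ℝ) ≤ n := by exact_mod_cast (by omega : 2 ≤ n)
  have hKn := card_knEdges n
  have hKpos : (0 : ℝ) < (knEdges n).ncard := by
    rw [hKn]
    nlinarith
  have hε1 : ε ≤ 1 / 2 := by
    have h1 : (U.ncard : ℝ) ≤ (knEdges n).ncard := by
      exact_mod_cast Set.ncard_le_ncard hU (Set.toFinite _)
    by_contra hcon
    nlinarith
  have hlarge : 1000 ≤ ε ^ 3 * n := by
    have h1 : 1000 / ε₀ ^ 3 ≤ n := by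
      refine (Nat.le_ceil _).trans ?_
      exact_mod_cast (by omega : ⌈1000 / ε₀ ^ 3⌉₊ ≤ n)
    rw [div_le_iff₀ (by positivity)] at h1
    have h2 : ε₀ ^ 3 * n ≤ ε ^ 3 * n := by gcongr
    linarith
  have hl' : (l : ℝ) ≤ ε / 100 * n := hl.trans (by gcongr)
  obtain ⟨G, hG⟩ : ∃ G : SimpleGraph (ZMod n), G.edgeSet = U := ⟨_, edgeSet_eq U hU⟩
  have hcount := card_tuples l ε hεpos hε1 hlarge hl' G (by
    rw [sum_degrees U G hG]
    rw [hKn] at hUcard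
    linarith)
  have hlower' : ε ^ 8 / 2 ^ 20 * (n : ℝ) ^ 4 ≤ 4096 * (shortcutCountIn l U : ℝ) := by
    refine hcount.trans ?_
    have hlower := card_le_shortcutCountIn l U
      (Finset.univ.filter fun t : ZMod n × ZMod n × ZMod n × ZMod n =>
        IsShortcutTuple l t.1 t.2.1 t.2.2.1 t.2.2.2 ∧
        (shortcutEdges l t.1 t.2.1 t.2.2.1 t.2.2.2 : Set (Sym2 (ZMod n))) ⊆ G.edgeSet)
      (fun t ht => hG ▸ (Finset.mem_filter.mp ht).2)
    exact_mod_cast hlower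
  have hupper : (shortcutCountIn l (knEdges n) : ℝ) ≤ (n : ℝ) ^ 4 := by
    exact_mod_cast shortcutCountIn_le l (knEdges n)
  calc (ε / 16) ^ 8 * (shortcutCountIn l (knEdges n) : ℝ) ≤ (ε / 16) ^ 8 * (n : ℝ) ^ 4 := by
        gcongr
    _ = ε ^ 8 / 2 ^ 20 * (n : ℝ) ^ 4 / 4096 := by ring
    _ ≤ shortcutCountIn l U := by linarith
end

section
/- If p = p(n) ≥ C n^{-1/2} for some positive constant C, and β, ε' ∈ (0, 1/6), then G(n,p) asymptotically almost surely satisfies: for every labeling of its vertices with ℤ_n, there are at most n^{3/4} directions i ∈ ℤ_n such that E_i is not (β, ε', p)-good in G(n,p). -/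
/-!
Fix a labelling. A bad direction contains one of at most `n + 1` blocks (an interval `E_i^k` or the
middle part `M_i`) whose number of edges of `G` deviates, up or down, by a factor of about `ε'` from
its mean. Picking such a block in every bad direction, with the sign of its deviation, and adding up
gives a signed sum `∑ ± (1_{e ∈ G} - p)` over `Q` distinct edges (distinct directions are
disjoint) which is at least `(ε'/2) p Q`. With more than `n^(3/4)` bad directions, `Q` is at least
`(β/2) n^(7/4)`, so by a Chernoff bound (`chernoff_edge_sum`, `prob_choiceEvent_le`) this has
probability at most `exp (-ε'² p Q / 16) ≤ exp (-a n^(5/4))` with `a > 0` constant.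

There are at most `(2n + 3)^n` choices of signed blocks (including the choice of the bad directions)
and `n!` labellings, each of which preserves the distribution (`sum_gnpWeight_map`). Both numbers are
`exp (O(n log n))`, so the union bound (`gnpProb_ge`) tends to `0` (`tendsto_union_bound`).

The block sizes come from the explicit enumeration of a direction in increasing order
(`exists_dir_enum`): if `i = 2c + r` with `r ∈ {0, 1}`, the `j`-th edge is `{c + j, c + r - j}`.
-/

open Filter Topology Classical

/-- `‖k‖`: the distance of `k` from `0` on the discrete circle `ZMod n`. -/
def circNorm {n : ℕ} (k : ZMod n) : ℕ := min k.val (-k).val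

/-- `E_i`: the edges of `K_n` in direction `i`, i.e. pairs `{x,y}` with `x + y = i`. -/
def dirEdges (n : ℕ) (i : ZMod n) : Set (Sym2 (ZMod n)) :=
  {e | ∃ x y : ZMod n, e = s(x, y) ∧ x ≠ y ∧ x + y = i}

/-- Two edges are crossing if their four endpoints are all distinct and lie
alternately on the cycle `C_n`. -/
def Crossing {n : ℕ} (e₁ e₂ : Sym2 (ZMod n)) : Prop :=
  ∃ x₁ y₁ x₂ y₂ : ZMod n, e₁ = s(x₁, y₁) ∧ e₂ = s(x₂, y₂) ∧
    InClockwiseOrder [x₁, x₂, y₁, y₂]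

/-- A crossing is close if some pair of endpoints of the two edges is at circular
distance at most `βn`. -/
def CloseCrossing {n : ℕ} (β : ℝ) (e₁ e₂ : Sym2 (ZMod n)) : Prop :=
  Crossing e₁ e₂ ∧ ∃ a b : ZMod n, a ∈ e₁ ∧ b ∈ e₂ ∧ (circNorm (a - b) : ℝ) ≤ β * n

/-- The centre point `i/2` (for odd `i.val` the floor `⌊i/2⌋`) of the direction `i`. -/
def dirCenter (n : ℕ) (i : ZMod n) : ZMod n := ((i.val / 2 : ℕ) : ZMod n)

/-- The distance of an edge from the centre point of its direction; within `E_i` this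
realises the linear order `≤_i`. -/
def edgeRank (n : ℕ) (i : ZMod n) (e : Sym2 (ZMod n)) : ℕ :=
  Sym2.lift ⟨fun x y => min (circNorm (x - dirCenter n i)) (circNorm (y - dirCenter n i)),
    fun _ _ => min_comm _ _⟩ e

/-- The (1-indexed) position of an edge of `E_i` in the order `≤_i`. -/
noncomputable def edgePos (n : ℕ) (i : ZMod n) (e : Sym2 (ZMod n)) : ℕ :=
  {e' ∈ dirEdges n i | edgeRank n i e' ≤ edgeRank n i e}.ncard

/-- `E_i^k`: the interval of `⌊βn⌋` consecutive edges of `(E_i, ≤_i)` starting from the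
`k`-th smallest. -/
noncomputable def dirInterval (n : ℕ) (i : ZMod n) (β : ℝ) (k : ℕ) :
    Set (Sym2 (ZMod n)) :=
  {e ∈ dirEdges n i | k ≤ edgePos n i e ∧ edgePos n i e < k + ⌊β * n⌋₊}

/-- `M_i`: `E_i` without its leftmost and rightmost subintervals of length `⌊βn⌋`. -/
noncomputable def dirMiddle (n : ℕ) (i : ZMod n) (β : ℝ) : Set (Sym2 (ZMod n)) :=
  {e ∈ dirEdges n i | ⌊β * n⌋₊ < edgePos n i e ∧
    edgePos n i e ≤ (dirEdges n i).ncard - ⌊β * n⌋₊}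

/-- The direction `E_i` is `(β, ε', p)`-good in `G`. -/
def DirGood (n : ℕ) (β ε' p : ℝ) (G : SimpleGraph (ZMod n)) (i : ZMod n) : Prop :=
  (∀ k : ℕ, 1 ≤ k → (k : ℝ) ≤ (1/2 - β) * n →
    |((G.edgeSet ∩ dirInterval n i β k).ncard : ℝ) - β * n * p| ≤ ε' * (β * n * p)) ∧
  |((G.edgeSet ∩ dirMiddle n i β).ncard : ℝ) - (1/2 - 2*β) * n * p| ≤
    ε' * ((1/2 - 2*β) * n * p)

/-- Probability that a graph drawn from the binomial random graph `G(n,p)` on the labeled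
vertex set `ZMod n` satisfies the predicate `P` (junk value `0` for `n = 0`). -/
noncomputable def gnpProbZMod (n : ℕ) (p : ℝ) (P : SimpleGraph (ZMod n) → Prop) : ℝ :=
  if h : n = 0 then 0 else
    letI : NeZero n := ⟨h⟩
    ∑ G : SimpleGraph (ZMod n),
      if P G then p ^ G.edgeSet.ncard * (1 - p) ^ (n.choose 2 - G.edgeSet.ncard) else 0

/-! ### Chernoff bound for weighted edge counts -/

/-- The probability of the graph `G` in the binomial random graph on `ZMod n`. -/
noncomputable def gnpWeight (n : ℕ) (p : ℝ) (G : SimpleGraph (ZMod n)) : ℝ :=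
  p ^ G.edgeSet.ncard * (1 - p) ^ (n.choose 2 - G.edgeSet.ncard)

/-- The edges of the complete graph on `ZMod n`. -/
noncomputable def allEdges (n : ℕ) [NeZero n] : Finset (Sym2 (ZMod n)) :=
  Finset.univ.filter fun e => ¬ e.IsDiag

lemma card_allEdges (n : ℕ) [NeZero n] : (allEdges n).card = n.choose 2 := by
  have h := Sym2.card_subtype_not_diag (α := ZMod n)
  rw [ZMod.card] at h
  rw [← h, Fintype.card_subtype, allEdges]

lemma gnpWeight_nonneg {n : ℕ} {p : ℝ} (hp0 : 0 ≤ p) (hp1 : p ≤ 1)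
    (G : SimpleGraph (ZMod n)) : 0 ≤ gnpWeight n p G :=
  mul_nonneg (pow_nonneg hp0 _) (pow_nonneg (by linarith) _)

/-- Edges are independent: the expectation of a product of edge factors factorises. -/
lemma sum_gnpWeight_mul_prod (n : ℕ) [NeZero n] (p : ℝ) (a : Sym2 (ZMod n) → ℝ) :
    ∑ G : SimpleGraph (ZMod n), gnpWeight n p G *
      ∏ e ∈ allEdges n, (if e ∈ G.edgeSet then a e else 1) =
    ∏ e ∈ allEdges n, (p * a e + (1 - p)) := by
  rw [Finset.prod_add]
  have hsub : ∀ G : SimpleGraph (ZMod n), G.edgeSet.toFinset ⊆ allEdges n := by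
    intro G e he
    simp only [Set.mem_toFinset] at he
    simp only [allEdges, Finset.mem_filter, Finset.mem_univ, true_and]
    exact G.not_isDiag_of_mem_edgeSet he
  refine Finset.sum_nbij' (fun G => G.edgeSet.toFinset)
    (fun S => SimpleGraph.fromEdgeSet (S : Set (Sym2 (ZMod n)))) ?_ ?_ ?_ ?_ ?_
  · intro G _
    exact Finset.mem_powerset.mpr (hsub G)
  · intro S _
    exact Finset.mem_univ _
  · intro G _
    simp
  · intro S hS
    have hS' := Finset.mem_powerset.mp hS
    ext e
    simp only [Set.mem_toFinset, SimpleGraph.edgeSet_fromEdgeSet, Set.mem_sdiff, Finset.mem_coe]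
    refine ⟨fun h => h.1, fun h => ⟨h, ?_⟩⟩
    have := hS' h
    simpa [allEdges] using this
  · intro G _
    have h1 : ∏ e ∈ allEdges n, (if e ∈ G.edgeSet then a e else 1) =
        ∏ e ∈ G.edgeSet.toFinset, a e := by
      rw [← Finset.prod_filter]
      congr 1
      ext e
      simp only [Finset.mem_filter, Set.mem_toFinset, and_iff_right_iff_imp]
      intro h
      exact hsub G (by simpa using h)
    rw [h1, Finset.prod_mul_distrib, Finset.prod_const, Finset.prod_const,
      Finset.card_sdiff_of_subset (hsub G), card_allEdges, gnpWeight, Set.ncard_eq_toFinset_card']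
    ring

lemma sum_gnpWeight (n : ℕ) [NeZero n] (p : ℝ) :
    ∑ G : SimpleGraph (ZMod n), gnpWeight n p G = 1 := by
  have := sum_gnpWeight_mul_prod n p (fun _ => 1)
  simpa using this

/-- Bennett-type bound on the moment generating function of a centred weighted edge count. -/
lemma mgf_edge_sum (n : ℕ) [NeZero n] {p : ℝ} (hp0 : 0 ≤ p) (hp1 : p ≤ 1)
    (x : Sym2 (ZMod n) → ℝ) (hx : ∀ e, |x e| ≤ 1) :
    ∑ G : SimpleGraph (ZMod n), gnpWeight n p G *
      Real.exp (∑ e ∈ allEdges n, x e * ((if e ∈ G.edgeSet then 1 else 0) - p)) ≤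
    Real.exp (p * ∑ e ∈ allEdges n, x e ^ 2) := by
  have h1 : ∀ G : SimpleGraph (ZMod n),
      Real.exp (∑ e ∈ allEdges n, x e * ((if e ∈ G.edgeSet then 1 else 0) - p)) =
      (∏ e ∈ allEdges n, (if e ∈ G.edgeSet then Real.exp (x e) else 1)) *
        ∏ e ∈ allEdges n, Real.exp (-(p * x e)) := by
    intro G
    rw [Real.exp_sum, ← Finset.prod_mul_distrib]
    refine Finset.prod_congr rfl fun e _ => ?_
    split_ifs
    · rw [← Real.exp_add]; congr 1; ring
    · rw [one_mul]; congr 1; ring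
  simp_rw [h1, ← mul_assoc]
  rw [← Finset.sum_mul, sum_gnpWeight_mul_prod, ← Finset.prod_mul_distrib, Finset.mul_sum,
    Real.exp_sum]
  refine Finset.prod_le_prod (fun e _ => ?_) (fun e _ => ?_)
  · have := Real.exp_pos (x e)
    have := Real.exp_pos (-(p * x e))
    have : 0 ≤ 1 - p := by linarith
    positivity
  · have hq := (abs_le.mp (Real.abs_exp_sub_one_sub_id_le (hx e))).2
    have h2 : p * Real.exp (x e) + (1 - p) ≤ Real.exp (p * (x e + x e ^ 2)) := by
      refine le_trans ?_ (Real.add_one_le_exp _)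
      nlinarith
    calc _ ≤ Real.exp (p * (x e + x e ^ 2)) * Real.exp (-(p * x e)) := by gcongr
      _ = _ := by rw [← Real.exp_add]; congr 1; ring

lemma chernoff_edge_sum (n : ℕ) [NeZero n] {p : ℝ} (hp0 : 0 ≤ p) (hp1 : p ≤ 1)
    (x : Sym2 (ZMod n) → ℝ) (hx : ∀ e, |x e| ≤ 1) (t : ℝ) :
    (∑ G : SimpleGraph (ZMod n),
      if t ≤ ∑ e ∈ allEdges n, x e * ((if e ∈ G.edgeSet then 1 else 0) - p)
        then gnpWeight n p G else 0) ≤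
    Real.exp (p * ∑ e ∈ allEdges n, x e ^ 2 - t) := by
  rw [sub_eq_add_neg, Real.exp_add]
  refine le_trans ?_ (mul_le_mul_of_nonneg_right (mgf_edge_sum n hp0 hp1 x hx)
    (Real.exp_pos _).le)
  rw [Finset.sum_mul]
  refine Finset.sum_le_sum fun G _ => ?_
  have hw := gnpWeight_nonneg hp0 hp1 G
  split_ifs with h
  · rw [mul_assoc, ← Real.exp_add]
    refine le_mul_of_one_le_right hw (Real.one_le_exp (by linarith))
  · positivity

/-- Relabelling the vertices preserves the distribution. -/
lemma sum_gnpWeight_map (n : ℕ) [NeZero n] (p : ℝ) (σ : ZMod n ≃ ZMod n)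
    (A : SimpleGraph (ZMod n) → Prop) :
    (∑ G : SimpleGraph (ZMod n), if A (G.map σ.toEmbedding) then gnpWeight n p G else 0) =
    ∑ G : SimpleGraph (ZMod n), if A G then gnpWeight n p G else 0 := by
  refine Fintype.sum_equiv (Equiv.simpleGraph σ) _ _ fun G => ?_
  have h1 : Equiv.simpleGraph σ G = G.map σ.toEmbedding := by
    ext x y
    have hxy : (Equiv.simpleGraph σ G).Adj x y ↔ G.Adj (σ.symm x) (σ.symm y) := by
      simp [Equiv.simpleGraph]
    rw [hxy, ← SimpleGraph.map_adj_apply (f := σ.toEmbedding)]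
    simp
  have h2 : gnpWeight n p (G.map σ.toEmbedding) = gnpWeight n p G := by
    have : (G.map σ.toEmbedding).edgeSet.ncard = G.edgeSet.ncard := by
      rw [SimpleGraph.edgeSet_map]
      exact Set.ncard_image_of_injective _ (Function.Embedding.injective _)
    simp only [gnpWeight, this]
  rw [h1, h2]

/-! ### The order on a direction -/

lemma circNorm_natCast {n : ℕ} [NeZero n] {d : ℕ} (h : 2 * d ≤ n) :
    circNorm (d : ZMod n) = d := by
  have hn : 0 < n := Nat.pos_of_ne_zero (NeZero.ne n)
  have hd : d < n := by omega
  rcases Nat.eq_zero_or_pos d with rfl | h0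
  · simp [circNorm]
  · have h1 : ((d : ℕ) : ZMod n).val = d := ZMod.val_cast_of_lt hd
    have h2 : (-(d : ZMod n)).val = n - d := by
      have : -(d : ZMod n) = ((n - d : ℕ) : ZMod n) := by
        rw [Nat.cast_sub hd.le]; simp
      rw [this, ZMod.val_cast_of_lt (by omega)]
    rw [circNorm, h1, h2]; omega

lemma circNorm_neg {n : ℕ} (d : ZMod n) : circNorm (-d) = circNorm d := by
  simp [circNorm, min_comm]

lemma circNorm_pred_le {n : ℕ} [NeZero n] {d : ℕ} (h : d ≤ n) (h0 : 2 * d ≤ n + 1) (h1 : 1 ≤ d) :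
    d - 1 ≤ circNorm (d : ZMod n) := by
  rcases Nat.lt_or_ge n (2 * d) with h2 | h2
  · have h1' : ((n - d : ℕ) : ZMod n) = - (d : ZMod n) := by
        rw [Nat.cast_sub h]; simp
    rw [← circNorm_neg, ← h1', circNorm_natCast (by omega)]
    omega
  · rw [circNorm_natCast h2]; omega

/-- The edges of a direction are enumerated in increasing order as
`{c + j, c + r - j}` for `1 ≤ j ≤ L`, where `i = 2c + r` with `r ∈ {0, 1}`. -/
lemma exists_dir_enum (n : ℕ) [NeZero n] (i : ZMod n) :
    ∃ (L : ℕ) (f : ℕ → Sym2 (ZMod n)), n ≤ 2 * L + 2 ∧ 2 * L ≤ n ∧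
      Set.InjOn f (Set.Icc 1 L) ∧ dirEdges n i = f '' Set.Icc 1 L ∧
      ∀ j ∈ Set.Icc 1 L, edgePos n i (f j) = j := by
  have hn : 0 < n := Nat.pos_of_ne_zero (NeZero.ne n)
  obtain ⟨r, hr⟩ : ∃ r, r = i.val % 2 := ⟨_, rfl⟩
  have hr2 : r < 2 := by omega
  set c : ZMod n := dirCenter n i with hc
  have hi : i = c + c + r := by
    have h1 : i.val = i.val / 2 + i.val / 2 + r := by omega
    have h2 : ((i.val : ℕ) : ZMod n) = i := ZMod.natCast_zmod_val i
    rw [← h2, hc, dirCenter]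
    conv_lhs => rw [h1]
    push_cast
    rfl
  have hivn : i.val < n := ZMod.val_lt i
  obtain ⟨L, hL⟩ : ∃ L, L = (n - 1 + r) / 2 := ⟨_, rfl⟩
  let f : ℕ → Sym2 (ZMod n) := fun j => s(c + j, c + r - j)
  have hrank : ∀ j ∈ Set.Icc 1 L, edgeRank n i (f j) = j - r := by
    intro j hj
    obtain ⟨hj1, hj2⟩ := hj
    have e1 : c + (j : ZMod n) - c = j := by ring
    have e2 : c + (r : ZMod n) - j - c = -((j - r : ℕ) : ZMod n) := by
      rw [Nat.cast_sub (by omega)]; ring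
    simp only [edgeRank, f, Sym2.lift_mk, ← hc, e1, e2, circNorm_neg]
    rw [circNorm_natCast (d := j - r) (by omega)]
    have : j - r ≤ circNorm (j : ZMod n) := by
      rcases Nat.lt_or_ge n (2 * j) with h2 | h2
      · have := circNorm_pred_le (n := n) (d := j) (by omega) (by omega) hj1
        omega
      · rw [circNorm_natCast h2]; omega
    omega
  have hinj : Set.InjOn f (Set.Icc 1 L) := by
    intro a ha b hb hab
    have h1 := hrank a ha
    have h2 := hrank b hb
    rw [hab, h2] at h1
    have := ha.1
    have := hb.1
    omega
  have hE : dirEdges n i = f '' Set.Icc 1 L := by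
    ext e
    constructor
    · rintro ⟨x, y, rfl, hxy, hsum⟩
      have hy : y = c + c + r - x := by rw [← hi, ← hsum]; ring
      obtain ⟨d, hd⟩ : ∃ d, d = (x - c).val := ⟨_, rfl⟩
      have hdn : d < n := hd ▸ ZMod.val_lt _
      have hx : x = c + d := by rw [hd, ZMod.natCast_zmod_val]; ring
      have hy' : y = c + r - d := by rw [hy, hx]; ring
      have hne0 : 2 * d ≠ r := by
        intro h
        apply hxy
        rw [hx, hy', ← h]; push_cast; ring
      have hnen : 2 * d ≠ n + r := by
        intro h
        apply hxy
        have h' : ((2 * d : ℕ) : ZMod n) = ((n + r : ℕ) : ZMod n) := by rw [h]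
        push_cast at h'
        rw [ZMod.natCast_self, zero_add] at h'
        rw [hx, hy', ← h']; ring
      by_cases hcase : 1 ≤ d ∧ d ≤ L
      · exact ⟨d, hcase, by simp only [f]; rw [hx, hy']⟩
      · by_cases hd0 : d = 0
        · refine ⟨1, ⟨le_refl _, ?_⟩, ?_⟩
          · by_contra hL1
            have : n = 1 := by omega
            subst this
            exact hxy (Subsingleton.elim _ _)
          · have hr1 : r = 1 := by omega
            simp only [f]
            rw [hx, hy', hd0, hr1, Sym2.eq_swap]
            congr 1 <;> simp
        · refine ⟨n + r - d, ⟨by omega, by omega⟩, ?_⟩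
          have h3 : ((n + r - d : ℕ) : ZMod n) = r - d := by
            rw [Nat.cast_sub (by omega)]; push_cast; simp
          simp only [f]
          rw [hx, hy', h3, Sym2.eq_swap]
          congr 1 <;> ring
    · rintro ⟨j, ⟨hj1, hj2⟩, rfl⟩
      refine ⟨c + j, c + r - j, rfl, ?_, by rw [hi]; ring⟩
      intro h
      have h' : ((2 * j - r : ℕ) : ZMod n) = 0 := by
        rw [Nat.cast_sub (by omega)]; push_cast
        linear_combination h
      rw [ZMod.natCast_eq_zero_iff] at h'
      have := Nat.le_of_dvd (by omega) h'
      omega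
  refine ⟨L, f, by omega, by omega, hinj, hE, ?_⟩
  intro j hj
  have h1 : {e' ∈ dirEdges n i | edgeRank n i e' ≤ edgeRank n i (f j)} = f '' Set.Icc 1 j := by
    ext e
    constructor
    · rintro ⟨he, hle⟩
      rw [hE] at he
      obtain ⟨a, ha, rfl⟩ := he
      rw [hrank a ha, hrank j hj] at hle
      have := ha.1
      have := hj.1
      exact ⟨a, ⟨ha.1, by omega⟩, rfl⟩
    · rintro ⟨a, ha, rfl⟩
      have ha' : a ∈ Set.Icc 1 L := ⟨ha.1, ha.2.trans hj.2⟩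
      refine ⟨by rw [hE]; exact ⟨a, ha', rfl⟩, ?_⟩
      rw [hrank a ha', hrank j hj]
      have := ha.2
      omega
  rw [edgePos, h1, Set.InjOn.ncard_image
    (hinj.mono (Set.Icc_subset_Icc_right hj.2)), Set.ncard_eq_toFinset_card']
  simp

lemma ncard_pos_sub {n : ℕ} {i : ZMod n} {L : ℕ} {f : ℕ → Sym2 (ZMod n)}
    (hinj : Set.InjOn f (Set.Icc 1 L)) (hE : dirEdges n i = f '' Set.Icc 1 L)
    (hpos : ∀ j ∈ Set.Icc 1 L, edgePos n i (f j) = j) (a b : ℕ) (ha : 1 ≤ a) (hb : b ≤ L + 1) :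
    {e ∈ dirEdges n i | a ≤ edgePos n i e ∧ edgePos n i e < b}.ncard = b - a := by
  have h1 : {e ∈ dirEdges n i | a ≤ edgePos n i e ∧ edgePos n i e < b} = f '' Set.Ico a b := by
    ext e
    constructor
    · rintro ⟨he, h⟩
      rw [hE] at he
      obtain ⟨j, hj, rfl⟩ := he
      rw [hpos j hj] at h
      exact ⟨j, h, rfl⟩
    · rintro ⟨j, hj, rfl⟩
      have hj' : j ∈ Set.Icc 1 L := ⟨ha.trans hj.1, by have := hj.2; omega⟩
      exact ⟨by rw [hE]; exact ⟨j, hj', rfl⟩, by rw [hpos j hj']; exact hj⟩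
  rw [h1, Set.InjOn.ncard_image (hinj.mono ?_), Set.ncard_eq_toFinset_card']
  · simp
  · intro j hj
    exact ⟨ha.trans hj.1, by have := hj.2; omega⟩

lemma ncard_dirInterval (n : ℕ) [NeZero n] (i : ZMod n) {β : ℝ} (hβ : 0 < β) {k : ℕ}
    (hk1 : 1 ≤ k) (hk2 : (k : ℝ) ≤ (1 / 2 - β) * n) :
    |((dirInterval n i β k).ncard : ℝ) - β * n| ≤ 4 := by
  obtain ⟨L, f, hL1, hL2, hinj, hE, hpos⟩ := exists_dir_enum n i
  have hfl : (⌊β * n⌋₊ : ℝ) ≤ β * n := Nat.floor_le (by positivity)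
  have hfl2 : β * n < ⌊β * n⌋₊ + 1 := Nat.lt_floor_add_one _
  have hb : k + ⌊β * n⌋₊ ≤ L + 1 := by
    have h1 : (n : ℝ) ≤ 2 * L + 2 := by exact_mod_cast hL1
    have : ((k + ⌊β * n⌋₊ : ℕ) : ℝ) ≤ ((L + 1 : ℕ) : ℝ) := by push_cast; linarith
    exact_mod_cast this
  rw [dirInterval, ncard_pos_sub hinj hE hpos _ _ hk1 hb, Nat.add_sub_cancel_left, abs_le]
  constructor <;> linarith

lemma ncard_dirMiddle (n : ℕ) [NeZero n] (i : ZMod n) {β : ℝ} (hβ : 0 < β) (hβ' : β < 1 / 6) :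
    |((dirMiddle n i β).ncard : ℝ) - (1 / 2 - 2 * β) * n| ≤ 4 := by
  obtain ⟨L, f, hL1, hL2, hinj, hE, hpos⟩ := exists_dir_enum n i
  have hfl : (⌊β * n⌋₊ : ℝ) ≤ β * n := Nat.floor_le (by positivity)
  have hfl2 : β * n < ⌊β * n⌋₊ + 1 := Nat.lt_floor_add_one _
  have hcard : (dirEdges n i).ncard = L := by
    rw [hE, Set.InjOn.ncard_image hinj, Set.ncard_eq_toFinset_card']; simp
  have h1 : (n : ℝ) ≤ 2 * L + 2 := by exact_mod_cast hL1
  have h2 : 2 * (L : ℝ) ≤ n := by exact_mod_cast hL2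
  have h3 : (dirMiddle n i β).ncard = (L - ⌊β * n⌋₊ + 1) - (⌊β * n⌋₊ + 1) := by
    rw [← ncard_pos_sub hinj hE hpos _ _ (by omega) (by omega), dirMiddle, hcard]
    simp only [Nat.succ_le_iff, Nat.lt_succ_iff]
  rw [h3]
  have hle : 2 * ⌊β * n⌋₊ ≤ L + 1 := by
    have : ((2 * ⌊β * n⌋₊ : ℕ) : ℝ) ≤ ((L + 1 : ℕ) : ℝ) := by
      push_cast
      have : (0 : ℝ) ≤ n := by positivity
      nlinarith
    exact_mod_cast this
  have h4 : ∃ m : ℕ, (L - ⌊β * n⌋₊ + 1) - (⌊β * n⌋₊ + 1) = m ∧ m + 2 * ⌊β * n⌋₊ ≤ L + 1 ∧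
      L ≤ m + 2 * ⌊β * n⌋₊ := ⟨_, rfl, by omega, by omega⟩
  obtain ⟨m, hm, hm1, hm2⟩ := h4
  rw [hm]
  have hm1' : (m : ℝ) + 2 * ⌊β * n⌋₊ ≤ L + 1 := by exact_mod_cast hm1
  have hm2' : (L : ℝ) ≤ m + 2 * ⌊β * n⌋₊ := by exact_mod_cast hm2
  rw [abs_le]
  constructor <;> linarith

/-! ### Witnesses for bad directions -/

/-- The edge sets tested by goodness of direction `i`: the middle part for `k = 0`, and the
interval starting at the `k`-th edge for `k ≥ 1`. -/
noncomputable def blockSet (n : ℕ) (β : ℝ) (i : ZMod n) (k : ℕ) : Set (Sym2 (ZMod n)) :=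
  if k = 0 then dirMiddle n i β else dirInterval n i β k

/-- The sign of a deviation: upwards for `true`, downwards for `false`. -/
def devSign (b : Bool) : ℝ := if b then 1 else -1

lemma blockSet_subset (n : ℕ) (β : ℝ) (i : ZMod n) (k : ℕ) :
    blockSet n β i k ⊆ dirEdges n i := by
  unfold blockSet
  split_ifs
  · exact fun e he => he.1
  · exact fun e he => he.1

lemma exists_devSign (y t : ℝ) (h : t < |y|) : ∃ b, t < devSign b * y := by
  rcases abs_cases y with ⟨h1, _⟩ | ⟨h1, _⟩
  · exact ⟨true, by simp only [devSign, if_true]; linarith⟩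
  · exact ⟨false, by simp [devSign]; linarith⟩

/-- The rounding error of at most `4` in the block sizes costs half of the deviation. -/
lemma deviation_aux {β ε' p N μ F X s : ℝ} (hp0 : 0 ≤ p)
    (hε : 0 < ε') (hε1 : ε' < 1 / 6) (hN : 16 ≤ ε' * (β * N)) (hμ : β * N ≤ μ)
    (hF : |F - μ| ≤ 4) (hs : s = 1 ∨ s = -1) (hX : ε' * (μ * p) < s * (X - μ * p)) :
    β * N / 2 ≤ F ∧ ε' / 2 * (p * F) ≤ s * (X - p * F) := by
  obtain ⟨h1, h2⟩ := abs_le.mp hF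
  have h16 : 16 ≤ β * N := by nlinarith
  refine ⟨by linarith, ?_⟩
  have h3 : s * (X - p * F) ≥ s * (X - μ * p) - 4 * p := by
    rcases hs with rfl | rfl <;> nlinarith
  have h5 : ε' / 2 * F ≤ ε' * μ - 4 := by nlinarith
  nlinarith

lemma exists_block_of_not_dirGood (n : ℕ) [NeZero n] {β ε' p : ℝ} (hβ : 0 < β)
    (hβ1 : β < 1 / 6) (hp0 : 0 ≤ p) (hε : 0 < ε') (hε1 : ε' < 1 / 6)
    (hN : 16 ≤ ε' * (β * n)) (G : SimpleGraph (ZMod n)) (i : ZMod n)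
    (h : ¬ DirGood n β ε' p G i) :
    ∃ q : Fin (n + 1) × Bool, β * n / 2 ≤ (blockSet n β i q.1).ncard ∧
      ε' / 2 * (p * (blockSet n β i q.1).ncard) ≤
        devSign q.2 * ((G.edgeSet ∩ blockSet n β i q.1).ncard -
          p * (blockSet n β i q.1).ncard) := by
  have hn : (0 : ℝ) ≤ n := by positivity
  have hsg : ∀ b, devSign b = 1 ∨ devSign b = -1 := by
    intro b; cases b <;> simp [devSign]
  rw [DirGood, not_and_or] at h
  rcases h with h | h
  · push Not at h
    obtain ⟨k, hk1, hk2, hk⟩ := h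
    obtain ⟨b, hb⟩ := exists_devSign _ _ hk
    have hkn : k < n + 1 := by
      have : (k : ℝ) < ((n + 1 : ℕ) : ℝ) := by push_cast; nlinarith
      exact_mod_cast this
    refine ⟨(⟨k, hkn⟩, b), ?_⟩
    have hbs : blockSet n β i k = dirInterval n i β k := by
      rw [blockSet, if_neg (by omega)]
    simp only [hbs]
    exact deviation_aux hp0 hε hε1 hN le_rfl (ncard_dirInterval n i hβ hk1 hk2) (hsg b) hb
  · rw [not_le] at h
    obtain ⟨b, hb⟩ := exists_devSign _ _ h
    refine ⟨(0, b), ?_⟩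
    simp only [blockSet, Fin.val_zero, if_true]
    exact deviation_aux hp0 hε hε1 hN (by nlinarith) (ncard_dirMiddle n i hβ hβ1) (hsg b) hb

/-- The direction of an edge: the sum of its end points. -/
def edgeDir {n : ℕ} (e : Sym2 (ZMod n)) : ZMod n :=
  Sym2.lift ⟨fun x y => x + y, fun _ _ => add_comm _ _⟩ e

lemma mem_dirEdges_iff {n : ℕ} (i : ZMod n) (e : Sym2 (ZMod n)) :
    e ∈ dirEdges n i ↔ ¬ e.IsDiag ∧ edgeDir e = i := by
  constructor
  · rintro ⟨x, y, rfl, h, h'⟩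
    exact ⟨by simpa using h, h'⟩
  · induction e with
    | _ x y =>
      rintro ⟨h, h'⟩
      exact ⟨x, y, rfl, by simpa using h, h'⟩

/-- The coefficient of an edge in the signed sum attached to one direction, for a prescribed
block and sign (`none` if the direction does not take part). -/
noncomputable def blockCoef (n : ℕ) (β : ℝ) (i : ZMod n) (o : Option (Fin (n + 1) × Bool))
    (e : Sym2 (ZMod n)) : ℝ :=
  o.elim 0 fun q => if e ∈ blockSet n β i q.1 then devSign q.2 else 0

lemma abs_blockCoef_le (n : ℕ) (β : ℝ) (i : ZMod n) (o : Option (Fin (n + 1) × Bool))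
    (e : Sym2 (ZMod n)) : |blockCoef n β i o e| ≤ 1 := by
  rcases o with _ | ⟨k, b⟩
  · simp [blockCoef]
  · simp only [blockCoef, Option.elim, devSign]
    split_ifs <;> simp

lemma sum_block (n : ℕ) [NeZero n] (β : ℝ) (i : ZMod n) (k : ℕ) (g : Sym2 (ZMod n) → ℝ) :
    ∑ e ∈ allEdges n with edgeDir e = i, (if e ∈ blockSet n β i k then g e else 0) =
      ∑ e ∈ (blockSet n β i k).toFinset, g e := by
  rw [← Finset.sum_filter]
  congr 1
  ext e
  simp only [Finset.mem_filter, Set.mem_toFinset, allEdges, Finset.mem_univ, true_and,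
    and_iff_right_iff_imp]
  exact fun h => (mem_dirEdges_iff i e).mp (blockSet_subset n β i k h)

lemma sum_blockCoef_sq (n : ℕ) [NeZero n] (β : ℝ) (i : ZMod n) (q : Fin (n + 1) × Bool) :
    ∑ e ∈ allEdges n with edgeDir e = i, blockCoef n β i (some q) e ^ 2 =
      (blockSet n β i q.1).ncard := by
  have h := sum_block n β i q.1 (fun _ => 1)
  rw [Finset.sum_const, ← Set.ncard_eq_toFinset_card', nsmul_eq_mul, mul_one] at h
  rw [← h]
  refine Finset.sum_congr rfl fun e _ => ?_
  simp only [blockCoef, Option.elim, devSign]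
  split_ifs <;> simp

lemma sum_blockCoef_dev (n : ℕ) [NeZero n] (β p : ℝ) (G : SimpleGraph (ZMod n)) (i : ZMod n)
    (q : Fin (n + 1) × Bool) :
    ∑ e ∈ allEdges n with edgeDir e = i,
      blockCoef n β i (some q) e * ((if e ∈ G.edgeSet then 1 else 0) - p) =
    devSign q.2 * ((G.edgeSet ∩ blockSet n β i q.1).ncard - p * (blockSet n β i q.1).ncard) := by
  have h := sum_block n β i q.1
    (fun e => devSign q.2 * ((if e ∈ G.edgeSet then 1 else 0) - p))
  have h2 : ((G.edgeSet ∩ blockSet n β i q.1).ncard : ℝ) =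
      ∑ e ∈ (blockSet n β i q.1).toFinset, (if e ∈ G.edgeSet then (1 : ℝ) else 0) := by
    rw [Finset.sum_boole, Set.ncard_eq_toFinset_card']
    congr 2
    ext e
    simp [and_comm]
  rw [← Finset.mul_sum, Finset.sum_sub_distrib, Finset.sum_const, ← Set.ncard_eq_toFinset_card',
    nsmul_eq_mul, ← h2, mul_comm _ p] at h
  rw [← h]
  refine Finset.sum_congr rfl fun e _ => ?_
  simp only [blockCoef, Option.elim]
  split_ifs <;> simp

/-- The coefficient of an edge in the signed sum attached to a choice of a block and a sign
for some of the directions. -/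
noncomputable def choiceCoef (n : ℕ) (β : ℝ) (c : ZMod n → Option (Fin (n + 1) × Bool))
    (e : Sym2 (ZMod n)) : ℝ :=
  blockCoef n β (edgeDir e) (c (edgeDir e)) e

lemma sum_choiceCoef (n : ℕ) [NeZero n] (β : ℝ) (c : ZMod n → Option (Fin (n + 1) × Bool))
    (g : Sym2 (ZMod n) → ℝ → ℝ) :
    ∑ e ∈ allEdges n, g e (choiceCoef n β c e) =
      ∑ i, ∑ e ∈ allEdges n with edgeDir e = i, g e (blockCoef n β i (c i) e) := by
  rw [← Finset.sum_fiberwise (allEdges n) edgeDir]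
  refine Finset.sum_congr rfl fun i _ => Finset.sum_congr rfl fun e he => ?_
  rw [Finset.mem_filter] at he
  rw [choiceCoef, he.2]

/-- The event that the blocks selected by `c` contain many edges of the complete graph, and that
the signed deviation of the number of edges of `G` in them is large. -/
def ChoiceEvent (n : ℕ) [NeZero n] (β ε' p : ℝ) (c : ZMod n → Option (Fin (n + 1) × Bool))
    (G : SimpleGraph (ZMod n)) : Prop :=
  (n : ℝ) ^ ((3 : ℝ) / 4) * (β * n / 2) ≤ ∑ e ∈ allEdges n, choiceCoef n β c e ^ 2 ∧
  ε' / 2 * (p * ∑ e ∈ allEdges n, choiceCoef n β c e ^ 2) ≤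
    ∑ e ∈ allEdges n, choiceCoef n β c e * ((if e ∈ G.edgeSet then 1 else 0) - p)

/-- Many bad directions force one of the events `ChoiceEvent`: pick a deviating block in each bad
direction and add up the deviations. -/
lemma exists_choiceEvent (n : ℕ) [NeZero n] {β ε' p : ℝ} (hβ : 0 < β)
    (hβ1 : β < 1 / 6) (hp0 : 0 ≤ p) (hε : 0 < ε') (hε1 : ε' < 1 / 6)
    (hN : 16 ≤ ε' * (β * n)) (G : SimpleGraph (ZMod n))
    (h : (n : ℝ) ^ ((3 : ℝ) / 4) < ({i : ZMod n | ¬ DirGood n β ε' p G i}.ncard : ℝ)) :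
    ∃ c, ChoiceEvent n β ε' p c G := by
  have hex : ∀ i : ZMod n, ∃ o : Option (Fin (n + 1) × Bool),
      (¬ DirGood n β ε' p G i → β * n / 2 ≤
        ∑ e ∈ allEdges n with edgeDir e = i, blockCoef n β i o e ^ 2) ∧
      ε' / 2 * (p * ∑ e ∈ allEdges n with edgeDir e = i, blockCoef n β i o e ^ 2) ≤
        ∑ e ∈ allEdges n with edgeDir e = i,
          blockCoef n β i o e * ((if e ∈ G.edgeSet then 1 else 0) - p) := by
    intro i
    by_cases hi : DirGood n β ε' p G i
    · exact ⟨none, fun h => absurd hi h, by simp [blockCoef]⟩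
    · obtain ⟨q, hq1, hq2⟩ := exists_block_of_not_dirGood n hβ hβ1 hp0 hε hε1 hN G i hi
      refine ⟨some q, fun _ => ?_, ?_⟩
      · rw [sum_blockCoef_sq]; exact hq1
      · rw [sum_blockCoef_sq, sum_blockCoef_dev]; exact hq2
  choose c hc1 hc2 using hex
  refine ⟨c, ?_, ?_⟩
  · rw [sum_choiceCoef n β c (fun _ y => y ^ 2)]
    calc (n : ℝ) ^ ((3 : ℝ) / 4) * (β * n / 2)
        ≤ ({i : ZMod n | ¬ DirGood n β ε' p G i}.ncard : ℝ) * (β * n / 2) := by gcongr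
      _ = ∑ i : ZMod n with ¬ DirGood n β ε' p G i, (β * n / 2) := by
          rw [Finset.sum_const, nsmul_eq_mul, Set.ncard_eq_toFinset_card']
          congr 3
          ext i
          simp
      _ ≤ ∑ i : ZMod n with ¬ DirGood n β ε' p G i,
            ∑ e ∈ allEdges n with edgeDir e = i, blockCoef n β i (c i) e ^ 2 :=
          Finset.sum_le_sum fun i hi => hc1 i (Finset.mem_filter.mp hi).2
      _ ≤ _ := Finset.sum_le_sum_of_subset_of_nonneg (Finset.filter_subset _ _)
          fun i _ _ => Finset.sum_nonneg fun e _ => sq_nonneg _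
  · rw [sum_choiceCoef n β c (fun _ y => y ^ 2),
      sum_choiceCoef n β c (fun e y => y * ((if e ∈ G.edgeSet then 1 else 0) - p)),
      Finset.mul_sum, Finset.mul_sum]
    exact Finset.sum_le_sum fun i _ => hc2 i

/-! ### Union bounds -/

lemma prob_choiceEvent_le (n : ℕ) [NeZero n] {β ε' p : ℝ} (hp0 : 0 ≤ p) (hp1 : p ≤ 1)
    (hε : 0 < ε') (hε1 : ε' < 1 / 6) (c : ZMod n → Option (Fin (n + 1) × Bool)) :
    (∑ G : SimpleGraph (ZMod n), if ChoiceEvent n β ε' p c G then gnpWeight n p G else 0) ≤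
      Real.exp (-(ε' ^ 2 / 16 * (p * ((n : ℝ) ^ ((3 : ℝ) / 4) * (β * n / 2))))) := by
  by_cases hQ : (n : ℝ) ^ ((3 : ℝ) / 4) * (β * n / 2) ≤
      ∑ e ∈ allEdges n, choiceCoef n β c e ^ 2
  swap
  · simp only [ChoiceEvent, hQ, false_and, if_false, Finset.sum_const_zero]
    exact (Real.exp_pos _).le
  set Q := ∑ e ∈ allEdges n, choiceCoef n β c e ^ 2 with hQdef
  -- The exponent `λ²pQ - λ(ε'/2)pQ` is minimal at `λ = ε'/4`.
  have h := chernoff_edge_sum n hp0 hp1 (fun e => ε' / 4 * choiceCoef n β c e) (by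
    intro e
    have := abs_blockCoef_le n β (edgeDir e) (c (edgeDir e)) e
    rw [abs_mul, abs_of_pos (by positivity)]
    have h0 := abs_nonneg (choiceCoef n β c e)
    have h1 : |choiceCoef n β c e| ≤ 1 := this
    nlinarith) (ε' / 4 * (ε' / 2 * (p * Q)))
  have hsq : ∑ e ∈ allEdges n, (ε' / 4 * choiceCoef n β c e) ^ 2 = ε' ^ 2 / 16 * Q := by
    rw [hQdef, Finset.mul_sum]
    exact Finset.sum_congr rfl fun e _ => by ring
  rw [hsq] at h
  refine le_trans (Finset.sum_le_sum fun G _ => ?_) (h.trans (Real.exp_le_exp.mpr ?_))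
  · have hw := gnpWeight_nonneg hp0 hp1 G
    have hsum : ∑ e ∈ allEdges n,
          ε' / 4 * choiceCoef n β c e * ((if e ∈ G.edgeSet then 1 else 0) - p) =
        ε' / 4 * ∑ e ∈ allEdges n,
          choiceCoef n β c e * ((if e ∈ G.edgeSet then 1 else 0) - p) := by
      rw [Finset.mul_sum]
      exact Finset.sum_congr rfl fun e _ => by ring
    simp only [hsum]
    by_cases hE : ChoiceEvent n β ε' p c G
    · rw [if_pos hE, if_pos]
      exact mul_le_mul_of_nonneg_left hE.2 (by positivity)
    · rw [if_neg hE]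
      split_ifs <;> [exact hw; exact le_rfl]
  · have : p * ((n : ℝ) ^ ((3 : ℝ) / 4) * (β * n / 2)) ≤ p * Q := by gcongr
    have h2 : 0 ≤ ε' ^ 2 / 16 := by positivity
    nlinarith

lemma prob_exists_le (n : ℕ) [NeZero n] {p : ℝ} (hp0 : 0 ≤ p) (hp1 : p ≤ 1)
    {ι : Type} [Fintype ι] (A : SimpleGraph (ZMod n) → Prop)
    (B : ι → SimpleGraph (ZMod n) → Prop) (h : ∀ G, A G → ∃ j, B j G) :
    (∑ G : SimpleGraph (ZMod n), if A G then gnpWeight n p G else 0) ≤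
      ∑ j, ∑ G : SimpleGraph (ZMod n), if B j G then gnpWeight n p G else 0 := by
  rw [Finset.sum_comm]
  refine Finset.sum_le_sum fun G _ => ?_
  have hw := gnpWeight_nonneg hp0 hp1 G
  have hnn : ∀ j ∈ Finset.univ, (0 : ℝ) ≤ if B j G then gnpWeight n p G else 0 := by
    intro j _
    split_ifs <;> [exact hw; exact le_rfl]
  split_ifs with hA
  · obtain ⟨j, hj⟩ := h G hA
    refine le_trans ?_ (Finset.single_le_sum hnn (Finset.mem_univ j))
    rw [if_pos hj]
  · exact Finset.sum_nonneg hnn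

lemma gnpProb_eq_one_sub (n : ℕ) [NeZero n] (p : ℝ) (P : SimpleGraph (ZMod n) → Prop) :
    gnpProbZMod n p P =
      1 - ∑ G : SimpleGraph (ZMod n), if ¬ P G then gnpWeight n p G else 0 := by
  have h1 : gnpProbZMod n p P =
      ∑ G : SimpleGraph (ZMod n), if P G then gnpWeight n p G else 0 := by
    rw [gnpProbZMod, dif_neg (NeZero.ne n)]
    rfl
  rw [h1, eq_sub_iff_add_eq, ← Finset.sum_add_distrib, ← sum_gnpWeight n p]
  refine Finset.sum_congr rfl fun G _ => ?_
  by_cases h : P G <;> simp [h]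

lemma gnpProb_le_one (n : ℕ) [NeZero n] {p : ℝ} (hp0 : 0 ≤ p) (hp1 : p ≤ 1)
    (P : SimpleGraph (ZMod n) → Prop) : gnpProbZMod n p P ≤ 1 := by
  rw [gnpProb_eq_one_sub, sub_le_self_iff]
  refine Finset.sum_nonneg fun G _ => ?_
  have hw := gnpWeight_nonneg hp0 hp1 G
  split_ifs <;> [exact le_rfl; exact hw]

/-- Quantitative form of the theorem: `n!` labellings, `(2n + 3)^n` choices of blocks. -/
lemma gnpProb_ge (n : ℕ) [NeZero n] {β ε' p : ℝ} (hβ : 0 < β)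
    (hβ1 : β < 1 / 6) (hp0 : 0 ≤ p) (hp1 : p ≤ 1) (hε : 0 < ε') (hε1 : ε' < 1 / 6)
    (hN : 16 ≤ ε' * (β * n)) :
    1 - (n.factorial : ℝ) * ((2 * n + 3 : ℝ) ^ n *
      Real.exp (-(ε' ^ 2 / 16 * (p * ((n : ℝ) ^ ((3 : ℝ) / 4) * (β * n / 2)))))) ≤
    gnpProbZMod n p (fun G => ∀ σ : ZMod n ≃ ZMod n,
      ({i : ZMod n | ¬ DirGood n β ε' p (G.map σ.toEmbedding) i}.ncard : ℝ) ≤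
        (n : ℝ) ^ ((3 : ℝ) / 4)) := by
  set P : SimpleGraph (ZMod n) → Prop := fun G => ∀ σ : ZMod n ≃ ZMod n,
      ({i : ZMod n | ¬ DirGood n β ε' p (G.map σ.toEmbedding) i}.ncard : ℝ) ≤
        (n : ℝ) ^ ((3 : ℝ) / 4) with hP
  set bad : SimpleGraph (ZMod n) → Prop := fun G => (n : ℝ) ^ ((3 : ℝ) / 4) <
      ({i : ZMod n | ¬ DirGood n β ε' p G i}.ncard : ℝ) with hbad
  have h1 := gnpProb_eq_one_sub n p P
  have h3 := prob_exists_le n hp0 hp1 (fun G => ¬ P G)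
    (fun (σ : ZMod n ≃ ZMod n) G => bad (G.map σ.toEmbedding)) (by
      intro G hG
      simpa [hP, hbad] using hG)
  have h4 := prob_exists_le n hp0 hp1 bad (fun c G => ChoiceEvent n β ε' p c G)
    (fun G hG => exists_choiceEvent n hβ hβ1 hp0 hε hε1 hN G hG)
  have h5 := h4.trans (Finset.sum_le_sum fun c _ =>
    prob_choiceEvent_le n (β := β) hp0 hp1 hε hε1 c)
  simp only [sum_gnpWeight_map n p _ bad] at h3
  rw [Finset.sum_const, nsmul_eq_mul, Finset.card_univ] at h3 h5
  rw [Fintype.card_perm, ZMod.card] at h3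
  have hcard : (Fintype.card (ZMod n → Option (Fin (n + 1) × Bool)) : ℝ) = (2 * n + 3 : ℝ) ^ n := by
    rw [Fintype.card_fun, Fintype.card_option, Fintype.card_prod, Fintype.card_fin,
      Fintype.card_bool, ZMod.card]
    push_cast
    ring
  rw [hcard] at h5
  have h6 := mul_le_mul_of_nonneg_left h5 (Nat.cast_nonneg (α := ℝ) n.factorial)
  rw [h1]
  refine sub_le_sub_left (le_trans (le_of_eq ?_) (h3.trans h6)) 1
  exact Finset.sum_congr rfl fun G _ => by congr

/-! ### Asymptotics -/

lemma tendsto_union_bound {a : ℝ} (ha : 0 < a) :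
    Tendsto (fun n : ℕ => (n.factorial : ℝ) * ((2 * n + 3 : ℝ) ^ n *
      Real.exp (-(a * (n : ℝ) ^ ((5 : ℝ) / 4))))) atTop (nhds 0) := by
  have hlog : ∀ᶠ n : ℕ in atTop, Real.log n ≤ a / 6 * (n : ℝ) ^ ((1 : ℝ) / 4) := by
    have h := (isLittleO_log_rpow_atTop (r := 1 / 4) (by norm_num)).bound
      (show (0 : ℝ) < a / 6 by positivity)
    have h' := tendsto_natCast_atTop_atTop (R := ℝ) |>.eventually h
    filter_upwards [h', eventually_ge_atTop 1] with n hn h1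
    have h0 : (0 : ℝ) ≤ (n : ℝ) ^ ((1 : ℝ) / 4) := by positivity
    have hl : 0 ≤ Real.log n := Real.log_nonneg (by exact_mod_cast h1)
    rwa [Real.norm_of_nonneg hl, Real.norm_of_nonneg h0] at hn
  have hlim : Tendsto (fun n : ℕ => Real.exp (-(a / 2 * (n : ℝ) ^ ((5 : ℝ) / 4)))) atTop
      (nhds 0) := by
    refine Real.tendsto_exp_neg_atTop_nhds_zero.comp ?_
    exact ((tendsto_rpow_atTop (by norm_num)).comp tendsto_natCast_atTop_atTop).const_mul_atTop
      (by positivity)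
  refine squeeze_zero' (Eventually.of_forall fun n => by positivity) ?_ hlim
  filter_upwards [hlog, eventually_ge_atTop 3] with n hn h3
  have h3' : (3 : ℝ) ≤ n := by exact_mod_cast h3
  have hpos : (0 : ℝ) < n := by linarith
  have hf : (n.factorial : ℝ) ≤ (n : ℝ) ^ n := by exact_mod_cast Nat.factorial_le_pow n
  have hg : (2 * n + 3 : ℝ) ^ n ≤ ((n : ℝ) ^ 2) ^ n := by
    gcongr; nlinarith
  have hexp : (n : ℝ) ^ n * ((n : ℝ) ^ 2) ^ n = Real.exp (3 * n * Real.log n) := by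
    rw [← pow_mul, ← pow_add, ← Real.rpow_natCast, Real.rpow_def_of_pos hpos]
    congr 1
    push_cast
    ring
  have hn54 : (n : ℝ) ^ ((5 : ℝ) / 4) = n * (n : ℝ) ^ ((1 : ℝ) / 4) := by
    rw [show (5 : ℝ) / 4 = 1 + 1 / 4 by norm_num, Real.rpow_add hpos, Real.rpow_one]
  calc _ ≤ (n : ℝ) ^ n * (((n : ℝ) ^ 2) ^ n * Real.exp (-(a * (n : ℝ) ^ ((5 : ℝ) / 4)))) := by
        gcongr
    _ = Real.exp (3 * n * Real.log n - a * (n : ℝ) ^ ((5 : ℝ) / 4)) := by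
        rw [← mul_assoc, hexp, ← Real.exp_add, sub_eq_add_neg]
    _ ≤ _ := by
        apply Real.exp_le_exp.mpr
        rw [hn54]
        nlinarith [mul_le_mul_of_nonneg_left hn hpos.le]

/-- If `p(n) ≥ C·n^(-1/2)` with `C > 0` and `β, ε' ∈ (0, 1/6)`, then a.a.s. for every
labeling of the vertices of `G(n,p)` with `ZMod n` there are at most `n^(3/4)` directions
`i` that are not `(β, ε', p)`-good. -/
theorem aas_few_bad_directions (C : ℝ) (hC : 0 < C) (p : ℕ → ℝ)
    (hp : ∀ n : ℕ, C * (n : ℝ) ^ (-(1/2) : ℝ) ≤ p n) (hp1 : ∀ n : ℕ, p n ≤ 1)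
    (β ε' : ℝ) (hβ : β ∈ Set.Ioo (0 : ℝ) (1/6)) (hε' : ε' ∈ Set.Ioo (0 : ℝ) (1/6)) :
    Filter.Tendsto
      (fun n : ℕ => gnpProbZMod n (p n) (fun G =>
        ∀ σ : ZMod n ≃ ZMod n,
          ({i : ZMod n | ¬ DirGood n β ε' (p n) (G.map σ.toEmbedding) i}.ncard : ℝ) ≤
            (n : ℝ) ^ ((3 : ℝ)/4)))
      Filter.atTop (nhds 1) := by
  obtain ⟨hβ0, hβ1⟩ := hβ
  obtain ⟨hε0, hε1⟩ := hε'
  have ha : 0 < ε' ^ 2 / 16 * (C * (β / 2)) := by positivity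
  have hlow := (tendsto_union_bound ha).const_sub 1
  rw [sub_zero] at hlow
  have hlarge : ∀ᶠ n : ℕ in atTop, 16 / (ε' * β) ≤ (n : ℝ) :=
    tendsto_natCast_atTop_atTop.eventually_ge_atTop _
  refine tendsto_of_tendsto_of_tendsto_of_le_of_le' hlow tendsto_const_nhds ?_ ?_
  · filter_upwards [hlarge, eventually_ge_atTop 1] with n hn h1
    have : NeZero n := ⟨by omega⟩
    have hpos : (0 : ℝ) < n := by exact_mod_cast h1
    have hp0 : 0 ≤ p n := le_trans (by positivity) (hp n)
    have hN : 16 ≤ ε' * (β * n) := by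
      rw [div_le_iff₀ (by positivity)] at hn
      linarith
    refine le_trans ?_ (gnpProb_ge n hβ0 hβ1 hp0 (hp1 n) hε0 hε1 hN)
    -- `n^(-1/2) · n^(3/4) · n = n^(5/4)`
    have hpow : (n : ℝ) ^ ((5 : ℝ) / 4) =
        (n : ℝ) ^ (-(1 / 2) : ℝ) * ((n : ℝ) ^ ((3 : ℝ) / 4) * n) := by
      rw [← mul_assoc, ← Real.rpow_add hpos, ← Real.rpow_add_one hpos.ne']
      norm_num
    have key : ε' ^ 2 / 16 * (C * (β / 2)) * (n : ℝ) ^ ((5 : ℝ) / 4) ≤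
        ε' ^ 2 / 16 * (p n * ((n : ℝ) ^ ((3 : ℝ) / 4) * (β * n / 2))) := by
      calc _ = ε' ^ 2 / 16 * ((C * (n : ℝ) ^ (-(1 / 2) : ℝ)) *
            ((n : ℝ) ^ ((3 : ℝ) / 4) * (β * n / 2))) := by rw [hpow]; ring
        _ ≤ _ := by
          gcongr
          exact hp n
    gcongr
  · filter_upwards [eventually_ge_atTop 1] with n h1
    have : NeZero n := ⟨by omega⟩
    exact gnpProb_le_one n (le_trans (by positivity) (hp n)) (hp1 n) _
end
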